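/- arXiv:2312.11061 — 4 statements merged into one kernel-verified Lean document; each statement's English description precedes it below -/
import Mathlib

section
/- Consider the compartmental system (S) on the box 𝒳 = [0,c₁] × ⋯ × [0,cₙ] satisfying assumptions (A1)–(A7), with flow φ(t,ξ) denoting the unique solution with φ(0,ξ) = ξ ∈ 𝒳. Let 1 < l ≤ n, a ∈ (0,∞)^l and b ≥ 0, and consider the set ℱ(a,b,l) of compartmental matrices. Suppose there exist a box S ⊆ 𝒳 (a product of n intervals) and a time τ ≥ 0 such that φ(t,ξ) ∈ S for all t ≥ τ and all ξ ∈ 𝒳, and F(t,x) ∈ ℱ(a,b,l) for all t ≥ τ and all x ∈ S. Then (S) is incrementally exponentially stable with respect to 𝒳: there exist λ > 0 and γ ≥ 1 such that |φ(t,ξ¹) − φ(t,ξ²)|₁ ≤ γ e^{−λ t} |ξ¹ − ξ²|₁ for all ξ¹, ξ² ∈ 𝒳 and all t ≥ 0. -/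
open Finset

/-- An `n × n` real matrix is compartmental if it is Metzler (nonnegative
off-diagonal entries) and all of its column sums are nonpositive. -/
def IsCompartmental {n : ℕ} (F : Matrix (Fin n) (Fin n) ℝ) : Prop :=
  (∀ i j : Fin n, i ≠ j → 0 ≤ F i j) ∧ ∀ i : Fin n, (∑ k, F k i) ≤ 0

/-- The set `ℱ(a,b,l)` of compartmental matrices (`0`-based indices). -/
def MemCalF {n l : ℕ} (hl : 1 < l) (hln : l ≤ n) (a : Fin l → ℝ) (b : ℝ)
    (F : Matrix (Fin n) (Fin n) ℝ) : Prop :=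
  IsCompartmental F ∧
  (∀ i j : Fin n, i < j → F i j ≤ b) ∧
  (∀ i : Fin n, (hi : (i : ℕ) + 1 < l) →
    a ⟨i, Nat.lt_of_succ_lt hi⟩ ≤ ∑ k ∈ univ.filter (fun k : Fin n => i < k), F k i) ∧
  (∀ i : Fin n, l - 1 ≤ (i : ℕ) → (∑ k, F k i) ≤ -(a ⟨l - 1, by omega⟩))

/-- Regularity assumption (A1) for a scalar coefficient function
`h : [0,∞) × [0, ci] → ℝ`: continuity, nonnegativity and Lipschitz continuity
in the second argument uniformly in the first. -/
def A1fun (ci : ℝ) (h : ℝ → ℝ → ℝ) : Prop :=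
  ContinuousOn (fun p : ℝ × ℝ => h p.1 p.2) (Set.Ici 0 ×ˢ Set.Icc 0 ci) ∧
  (∀ t ∈ Set.Ici (0 : ℝ), ∀ s ∈ Set.Icc 0 ci, 0 ≤ h t s) ∧
  ∃ L : ℝ, ∀ t ∈ Set.Ici (0 : ℝ), ∀ s₁ ∈ Set.Icc 0 ci, ∀ s₂ ∈ Set.Icc 0 ci,
    |h t s₁ - h t s₂| ≤ L * |s₁ - s₂|

/-- The box `𝒳 = [0,c₁] × ⋯ × [0,cₙ]`. -/
def boxIcc {n : ℕ} (c : Fin n → ℝ) : Set (Fin n → ℝ) :=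
  {x | ∀ i, x i ∈ Set.Icc 0 (c i)}

/-- Right-hand side of the compartmental system (S). -/
def Qrhs {n : ℕ} (f0 : Fin n → ℝ → ℝ → ℝ) (fc : Fin n → Fin n → ℝ → ℝ → ℝ)
    (g Ienv : Fin n → ℝ → ℝ → ℝ) (t : ℝ) (x : Fin n → ℝ) : Fin n → ℝ := fun i =>
  (∑ j ∈ univ.erase i, fc i j t (x i) * g j t (x j)) + Ienv i t (x i)
    - (f0 i t (x i) + ∑ j ∈ univ.erase i, fc j i t (x j)) * g i t (x i)

/-- The compartmental matrix `F(t,x)` of system (S). -/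
def Fmat {n : ℕ} (f0 : Fin n → ℝ → ℝ → ℝ) (fc : Fin n → Fin n → ℝ → ℝ → ℝ)
    (t : ℝ) (x : Fin n → ℝ) : Matrix (Fin n) (Fin n) ℝ :=
  Matrix.of fun i j =>
    if i = j then -(f0 i t (x i)) - ∑ k ∈ univ.erase i, fc k i t (x k)
    else fc i j t (x i)

/-- The `1`-norm `|x|₁ = ∑ i, |x i|` on `ℝⁿ`. -/
def onenorm {n : ℕ} (x : Fin n → ℝ) : ℝ := ∑ i, |x i|

/-!
For two trajectories `p`, `q`, the terms of `Q(t,p) - Q(t,q)` group as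
`F(t,p) (g(t,p) - g(t,q)) + (F(t,p) - F(t,q)) g(t,q) + (I(t,p) - I(t,q))`. We measure `p - q` in the
norm `∑ wᵢ |xᵢ|`. The first term contributes the weighted column sums `wᵀ F(t,p)` times
`|g(t,p) - g(t,q)|`. The monotonicity assumptions make the other two terms nonexpansive, except that
moving mass from `j` to `i` costs `(wⱼ - wᵢ)⁺`. Weights that are all equal show that the flow never
expands the `1`-norm. Weights decreasing geometrically along the chain `1, …, l` and close enough to
`1` make all weighted column sums of every matrix in `ℱ(a,b,l)` negative, by a margin which absorbs
that cost, and Grönwall's inequality gives exponential decay after time `τ`.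
-/

section AbsSubgradient

lemma mul_le_abs_of_abs_le_one {s : ℝ} (hs : |s| ≤ 1) (v : ℝ) : s * v ≤ |v| :=
  calc s * v ≤ |s| * |v| := (le_abs_self _).trans_eq (abs_mul s v)
    _ ≤ |v| := mul_le_of_le_one_left (abs_nonneg v) hs

/-- `s` is a subgradient of the absolute value at `x`: it is the sign of `x` when `x ≠ 0`, and any
element of `[-1, 1]` when `x = 0`. The right derivative of `|d|` is `s * d'` for such an `s`. -/
def IsAbsSubgradient (s x : ℝ) : Prop :=
  |s| ≤ 1 ∧ s * x = |x|

namespace IsAbsSubgradient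

variable {s x y : ℝ}

lemma eq_one (hs : IsAbsSubgradient s x) (hx : 0 < x) : s = 1 :=
  mul_right_cancel₀ hx.ne' (by rw [hs.2, abs_of_pos hx, one_mul])

lemma eq_neg_one (hs : IsAbsSubgradient s x) (hx : x < 0) : s = -1 :=
  mul_right_cancel₀ hx.ne (by rw [hs.2, abs_of_neg hx, neg_one_mul])

lemma mul_sub_eq_abs {h : ℝ → ℝ} {A : Set ℝ} (hs : IsAbsSubgradient s (x - y))
    (hh : MonotoneOn h A) (hx : x ∈ A) (hy : y ∈ A) : s * (h x - h y) = |h x - h y| := by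
  rcases lt_trichotomy x y with hxy | rfl | hxy
  · rw [hs.eq_neg_one (sub_neg.2 hxy), abs_of_nonpos (sub_nonpos.2 (hh hx hy hxy.le)), neg_one_mul]
  · simp
  · rw [hs.eq_one (sub_pos.2 hxy), abs_of_nonneg (sub_nonneg.2 (hh hy hx hxy.le)), one_mul]

lemma mul_sub_eq_neg_abs {h : ℝ → ℝ} {A : Set ℝ} (hs : IsAbsSubgradient s (x - y))
    (hh : AntitoneOn h A) (hx : x ∈ A) (hy : y ∈ A) : s * (h x - h y) = -|h x - h y| := by
  have := hs.mul_sub_eq_abs hh.neg hx hy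
  simp only [neg_sub_neg, abs_sub_comm (h y)] at this
  linarith

end IsAbsSubgradient

lemma isAbsSubgradient_sign (x : ℝ) : IsAbsSubgradient (SignType.sign x) x := by
  refine ⟨?_, sign_mul_self x⟩
  rcases lt_trichotomy x 0 with hx | rfl | hx <;> simp [*]

lemma exists_isAbsSubgradient_hasDerivWithinAt_abs {d : ℝ → ℝ} {d' t : ℝ}
    (h : HasDerivAt d d' t) :
    ∃ s, IsAbsSubgradient s (d t) ∧
      HasDerivWithinAt (fun z => |d z|) (s * d') (Set.Ici t) t := by
  by_cases h0 : d t = 0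
  · have hs := isAbsSubgradient_sign d'
    refine ⟨SignType.sign d', ⟨hs.1, by simp [h0]⟩, ?_⟩
    rw [hs.2, ← hasDerivWithinAt_Ioi_iff_Ici,
      hasDerivWithinAt_iff_tendsto_slope' Set.self_notMem_Ioi]
    have hslope := (hasDerivWithinAt_iff_tendsto_slope' Set.self_notMem_Ioi).1
      (h.hasDerivWithinAt (s := Set.Ioi t))
    refine hslope.abs.congr' ?_
    filter_upwards [self_mem_nhdsWithin] with z hz
    simp [slope_def_field, h0, abs_div, abs_of_pos (sub_pos.2 (Set.mem_Ioi.1 hz))]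
  · exact ⟨SignType.sign (d t), isAbsSubgradient_sign _,
      ((hasDerivAt_abs h0).comp t h).hasDerivWithinAt⟩

end AbsSubgradient

section ExponentialDecay

lemma le_exp_mul_of_hasDerivWithinAt_Ici_le {f f' : ℝ → ℝ} {lam t₀ t : ℝ}
    (hf : ContinuousOn f (Set.Ici t₀))
    (hf' : ∀ z ≥ t₀, HasDerivWithinAt f (f' z) (Set.Ici z) z)
    (hle : ∀ z ≥ t₀, f' z ≤ -lam * f z) (ht : t₀ ≤ t) :
    f t ≤ Real.exp (-lam * (t - t₀)) * f t₀ := by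
  have hslope : ∀ z ∈ Set.Ico t₀ t, ∀ r, f' z < r →
      ∃ᶠ u in nhdsWithin z (Set.Ioi z), (u - z)⁻¹ * (f u - f z) < r := fun z hz r hr =>
    ((hf' z hz.1).liminf_right_slope_le hr).mono fun u hu => by
      simpa only [slope_def_field, div_eq_inv_mul] using hu
  have := le_gronwallBound_of_liminf_deriv_right_le (hf.mono Set.Icc_subset_Ici_self) hslope le_rfl
    (fun z hz => (hle z hz.1).trans_eq (add_zero _).symm) t ⟨ht, le_rfl⟩
  rwa [gronwallBound_ε0, mul_comm] at this

lemma le_mul_exp_mul_of_le_of_le_mul_exp {u : ℝ → ℝ} {W lam τ t : ℝ} (hW : 1 ≤ W)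
    (hlam : 0 ≤ lam) (hτ : 0 ≤ τ) (hu : 0 ≤ u 0) (hle : ∀ t ≥ 0, u t ≤ u 0)
    (hdecay : ∀ t ≥ τ, u t ≤ W * (Real.exp (-lam * (t - τ)) * u τ)) (ht : 0 ≤ t) :
    u t ≤ W * Real.exp (lam * τ) * Real.exp (-lam * t) * u 0 := by
  have hexp : W * Real.exp (lam * τ) * Real.exp (-lam * t) =
      W * Real.exp (-lam * (t - τ)) := by
    rw [mul_assoc, ← Real.exp_add]
    ring_nf
  rw [hexp]
  rcases le_total t τ with htτ | hτt
  · have hone : 1 ≤ Real.exp (-lam * (t - τ)) :=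
      Real.one_le_exp (mul_nonneg_of_nonpos_of_nonpos (neg_nonpos.2 hlam) (sub_nonpos.2 htτ))
    exact (hle t ht).trans (le_mul_of_one_le_left hu (one_le_mul_of_one_le_of_one_le hW hone))
  · calc u t ≤ W * (Real.exp (-lam * (t - τ)) * u τ) := hdecay t hτt
      _ ≤ W * (Real.exp (-lam * (t - τ)) * u 0) := by
        gcongr
        exact hle τ hτ
      _ = W * Real.exp (-lam * (t - τ)) * u 0 := (mul_assoc _ _ _).symm

end ExponentialDecay

section WeightedNorm

variable {ι : Type*} [Fintype ι]

/-- The weighted `1`-norm `∑ i, w i * |x i|`, a Lyapunov function for the difference of two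
trajectories. It is a norm only when all weights are positive, which the definition does not
require. -/
def weightedNorm (w x : ι → ℝ) : ℝ := ∑ i, w i * |x i|

lemma onenorm_eq_weightedNorm {n : ℕ} (x : Fin n → ℝ) : onenorm x = weightedNorm 1 x := by
  simp [onenorm, weightedNorm]

lemma weightedNorm_mono {w₁ w₂ : ι → ℝ} (hw : w₁ ≤ w₂) (x : ι → ℝ) :
    weightedNorm w₁ x ≤ weightedNorm w₂ x :=
  sum_le_sum fun i _ => mul_le_mul_of_nonneg_right (hw i) (abs_nonneg _)

lemma weightedNorm_smul (W : ℝ) (w x : ι → ℝ) :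
    weightedNorm (W • w) x = W * weightedNorm w x := by
  simp [weightedNorm, mul_sum, mul_assoc]

lemma weightedNorm_le_exp_mul {d d' : ℝ → ι → ℝ} {w : ι → ℝ} {lam t₀ t : ℝ}
    (hd : ∀ z ≥ t₀, HasDerivAt d (d' z) z)
    (hle : ∀ z ≥ t₀, ∀ s : ι → ℝ, (∀ i, IsAbsSubgradient (s i) (d z i)) →
      ∑ i, w i * (s i * d' z i) ≤ -lam * weightedNorm w (d z)) (ht : t₀ ≤ t) :
    weightedNorm w (d t) ≤ Real.exp (-lam * (t - t₀)) * weightedNorm w (d t₀) := by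
  have hdi : ∀ z ≥ t₀, ∀ i, HasDerivAt (fun u => d u i) (d' z i) z := fun z hz =>
    hasDerivAt_pi.1 (hd z hz)
  have hderiv : ∀ z ≥ t₀, ∃ D, HasDerivWithinAt (fun u => weightedNorm w (d u)) D (Set.Ici z) z ∧
      D ≤ -lam * weightedNorm w (d z) := fun z hz => by
    choose s hs hs' using fun i => exists_isAbsSubgradient_hasDerivWithinAt_abs (hdi z hz i)
    exact ⟨_, HasDerivWithinAt.fun_sum fun i _ => (hs' i).const_mul (w i), hle z hz s hs⟩
  choose! D hD hDle using hderiv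
  have hcont : ContinuousOn (fun u => weightedNorm w (d u)) (Set.Ici t₀) :=
    continuousOn_finsetSum _ fun i _ => continuousOn_const.mul
      (ContinuousOn.abs fun z hz => (hdi z hz i).continuousAt.continuousWithinAt)
  exact le_exp_mul_of_hasDerivWithinAt_Ici_le hcont hD hDle ht

end WeightedNorm

section WeightedColumnSums

open Matrix

variable {ι : Type*} [Fintype ι]

/-- The total amount by which the other weights exceed `w j`. It enters the weighted
column sums of `F` as the cost of moving mass out of `j`, and the effect of replacing `F(t,y)` by
`F(t,x)` as the cost of changing the flow into `j`. -/
def excess (w : ι → ℝ) (j : ι) : ℝ := ∑ k, (w k - w j)⁺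

lemma excess_nonneg (w : ι → ℝ) (j : ι) : 0 ≤ excess w j :=
  sum_nonneg fun _ _ => posPart_nonneg _

lemma excess_one (j : ι) : excess 1 j = 0 := by
  simp [excess]

lemma sum_mul_eq_sum_sub_mul_add (u v : ι → ℝ) (j : ι) :
    ∑ i, u i * v i = ∑ i, (u i - u j) * v i + u j * ∑ i, v i := by
  rw [mul_sum, ← sum_add_distrib]
  exact sum_congr rfl fun i _ => by ring

lemma sum_mul_mulVec_le_of_metzler {F : Matrix ι ι ℝ} (hF : ∀ i j, i ≠ j → 0 ≤ F i j)
    {w s v : ι → ℝ} (hw : 0 ≤ w) (hs : ∀ i, IsAbsSubgradient (s i) (v i)) :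
    ∑ i, w i * (s i * (F *ᵥ v) i) ≤ ∑ j, (w ᵥ* F) j * |v j| := by
  have hentry : ∀ i j, F i j * (s i * v j) ≤ F i j * |v j| := fun i j => by
    rcases eq_or_ne i j with rfl | hij
    · rw [(hs i).2]
    · exact mul_le_mul_of_nonneg_left (mul_le_abs_of_abs_le_one (hs i).1 _) (hF i j hij)
  calc ∑ i, w i * (s i * (F *ᵥ v) i)
      = ∑ i, ∑ j, w i * (F i j * (s i * v j)) := by
        simp only [mulVec, dotProduct, mul_sum]
        exact sum_congr rfl fun i _ => sum_congr rfl fun j _ => by ring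
    _ ≤ ∑ i, ∑ j, w i * (F i j * |v j|) :=
        sum_le_sum fun i _ => sum_le_sum fun j _ => mul_le_mul_of_nonneg_left (hentry i j) (hw i)
    _ = ∑ j, (w ᵥ* F) j * |v j| := by
        rw [sum_comm]
        simp only [vecMul, dotProduct, sum_mul, mul_assoc]

lemma sum_mul_mul_le_sum_posPart_mul {w s v : ι → ℝ} {j : ι} (hw : 0 ≤ w)
    (hs : |s j| ≤ 1) (hv : ∀ i, i ≠ j → s i * v i = -|v i|)
    (hsum : s j * ∑ i, v i ≤ 0) :
    ∑ i, w i * (s i * v i) ≤ ∑ i, (w j - w i)⁺ * |v i| := by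
  have hentry : ∀ i, (w i * s i - w j * s j) * v i ≤ (w j - w i)⁺ * |v i| := fun i => by
    rcases eq_or_ne i j with rfl | hij
    · simp
    · have hneg : s j * -v i ≤ |v i| := by simpa using mul_le_abs_of_abs_le_one hs (-v i)
      calc (w i * s i - w j * s j) * v i = w i * (s i * v i) + w j * (s j * -v i) := by ring
        _ ≤ w i * -|v i| + w j * |v i| := by
          rw [hv i hij]
          exact add_le_add_right (mul_le_mul_of_nonneg_left hneg (hw j)) _
        _ = (w j - w i) * |v i| := by ring
        _ ≤ (w j - w i)⁺ * |v i| := mul_le_mul_of_nonneg_right (le_posPart _) (abs_nonneg _)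
  calc ∑ i, w i * (s i * v i)
      = ∑ i, (w i * s i - w j * s j) * v i + w j * (s j * ∑ i, v i) := by
        simp only [← mul_assoc]
        exact sum_mul_eq_sum_sub_mul_add (fun i => w i * s i) v j
    _ ≤ ∑ i, (w j - w i)⁺ * |v i| := by
        linarith [sum_le_sum fun i (_ : i ∈ univ) => hentry i,
          mul_nonpos_of_nonneg_of_nonpos (hw j) hsum]

lemma sum_mul_mulVec_le_excess {D : Matrix ι ι ℝ} {w s v d : ι → ℝ} {K : ℝ} (hw : 0 ≤ w)
    (hv : 0 ≤ v) (hs : ∀ i, |s i| ≤ 1)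
    (hD : ∀ i j, i ≠ j → s i * D i j = -|D i j|) (hcol : ∀ j, s j * ∑ i, D i j ≤ 0)
    (hK : ∀ i j, i ≠ j → |D i j| * v j ≤ K * d i) :
    ∑ i, w i * (s i * (D *ᵥ v) i) ≤ K * ∑ i, excess w i * d i := by
  have hentry : ∀ i j, (w j - w i)⁺ * |D i j| * v j ≤ (w j - w i)⁺ * (K * d i) := fun i j => by
    rcases eq_or_ne i j with rfl | hij
    · simp
    · rw [mul_assoc]
      exact mul_le_mul_of_nonneg_left (hK i j hij) (posPart_nonneg _)
  calc ∑ i, w i * (s i * (D *ᵥ v) i)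
      = ∑ j, (∑ i, w i * (s i * D i j)) * v j := by
        simp only [mulVec, dotProduct, mul_sum, sum_mul, mul_assoc]
        exact sum_comm
    _ ≤ ∑ j, (∑ i, (w j - w i)⁺ * |D i j|) * v j :=
        sum_le_sum fun j _ => mul_le_mul_of_nonneg_right
          (sum_mul_mul_le_sum_posPart_mul hw (hs j) (fun i => hD i j) (hcol j)) (hv j)
    _ ≤ ∑ j, ∑ i, (w j - w i)⁺ * (K * d i) :=
        sum_le_sum fun j _ => by
          rw [sum_mul]
          exact sum_le_sum fun i _ => hentry i j
    _ = K * ∑ i, excess w i * d i := by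
        rw [sum_comm, mul_sum]
        refine sum_congr rfl fun i _ => ?_
        rw [← sum_mul, excess]
        ring

lemma vecMul_apply_le_of_antitone [LinearOrder ι] {F : Matrix ι ι ℝ} {w : ι → ℝ} {j : ι} {b δ : ℝ}
    (hw : Antitone w) (hF : ∀ i, i ≠ j → 0 ≤ F i j) (hb : ∀ i, i < j → F i j ≤ b)
    (hδ : ∀ i, j < i → w i ≤ w j - δ) :
    (w ᵥ* F) j ≤ w j * ∑ i, F i j + b * excess w j
      - δ * ∑ i ∈ univ.filter (fun i => j < i), F i j := by
  have hentry : ∀ i, (w i - w j) * F i j ≤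
      b * (w i - w j)⁺ - δ * (if j < i then F i j else 0) := fun i => by
    rcases lt_trichotomy i j with hij | rfl | hij
    · have hwij : 0 ≤ w i - w j := sub_nonneg.2 (hw hij.le)
      rw [if_neg hij.not_gt, posPart_eq_self.2 hwij]
      linarith [mul_le_mul_of_nonneg_left (hb i hij) hwij]
    · simp
    · have hwij : w i - w j ≤ -δ := by linarith [hδ i hij]
      rw [if_pos hij, posPart_eq_zero.2 (sub_nonpos.2 (hw hij.le))]
      linarith [mul_le_mul_of_nonneg_right hwij (hF i hij.ne')]
  calc (w ᵥ* F) j = ∑ i, (w i - w j) * F i j + w j * ∑ i, F i j :=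
        sum_mul_eq_sum_sub_mul_add w (fun i => F i j) j
    _ ≤ ∑ i, (b * (w i - w j)⁺ - δ * (if j < i then F i j else 0)) + w j * ∑ i, F i j :=
        add_le_add_left (sum_le_sum fun i _ => hentry i) _
    _ = _ := by
        rw [sum_sub_distrib, ← mul_sum, ← mul_sum, ← sum_filter, excess]
        ring

end WeightedColumnSums

section GeometricWeights

open Matrix

/-- Weights for `ℱ(a,b,m+1)`: they decrease to `1` at the index `m` and stay there, and the gap
below the index `k < m` is at least `ε * (r - 1) * r ^ k`. The growth rate `r` lets this gap
dominate the excess at `k`, and a small `ε` keeps the weights close to `1`. -/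
def geomWeight (m : ℕ) (ε r : ℝ) (k : ℕ) : ℝ := 1 + ε * (r ^ m - r ^ min k m)

variable {m : ℕ} {ε r : ℝ}

lemma geomWeight_antitone (hε : 0 ≤ ε) (hr : 1 ≤ r) : Antitone (geomWeight m ε r) :=
  fun i j hij => by
    unfold geomWeight
    gcongr

lemma one_le_geomWeight (hε : 0 ≤ ε) (hr : 1 ≤ r) (k : ℕ) : 1 ≤ geomWeight m ε r k :=
  le_add_of_nonneg_right
    (mul_nonneg hε (sub_nonneg.2 (pow_le_pow_right₀ hr (min_le_right k m))))

lemma geomWeight_le (hε : 0 ≤ ε) (hr : 0 ≤ r) (k : ℕ) : geomWeight m ε r k ≤ 1 + ε * r ^ m := by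
  unfold geomWeight
  gcongr
  exact sub_le_self _ (pow_nonneg hr _)

lemma geomWeight_le_sub (hε : 0 ≤ ε) (hr : 1 ≤ r) {k i : ℕ} (hk : k < m) (hki : k < i) :
    geomWeight m ε r i ≤ geomWeight m ε r k - ε * (r - 1) * r ^ k :=
  calc geomWeight m ε r i ≤ geomWeight m ε r (k + 1) := geomWeight_antitone hε hr hki
    _ = geomWeight m ε r k - ε * (r - 1) * r ^ k := by
      rw [geomWeight, geomWeight, min_eq_left hk.le, min_eq_left (Nat.add_one_le_iff.2 hk)]
      ring

lemma excess_geomWeight_le {n : ℕ} (hε : 0 ≤ ε) (hr : 0 ≤ r) (j : Fin n) :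
    excess (fun i : Fin n => geomWeight m ε r i) j ≤ n * (ε * r ^ min (j : ℕ) m) := by
  have hentry : ∀ k : Fin n,
      (geomWeight m ε r k - geomWeight m ε r j)⁺ ≤ ε * r ^ min (j : ℕ) m := fun k => by
    have hk : 0 ≤ ε * r ^ min (k : ℕ) m := by positivity
    refine sup_le ?_ (by positivity)
    unfold geomWeight
    linarith
  calc excess (fun i : Fin n => geomWeight m ε r i) j
      ≤ ∑ _k : Fin n, ε * r ^ min (j : ℕ) m := sum_le_sum fun k _ => hentry k
    _ = n * (ε * r ^ min (j : ℕ) m) := by simp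

namespace MemCalF

variable {n l : ℕ} {hl : 1 < l} {hln : l ≤ n} {a : Fin l → ℝ} {b K a₀ : ℝ}
  {F : Matrix (Fin n) (Fin n) ℝ}

lemma vecMul_geomWeight_le_of_lt (hF : MemCalF hl hln a b F) (hb : 0 ≤ b) (hK : 0 ≤ K)
    (ha : ∀ i, a₀ ≤ a i) (hε : 0 ≤ ε) (hr : 1 ≤ r) (hra : (r - 1) * a₀ = (b + K) * n + 1)
    {j : Fin n} (hj : (j : ℕ) + 1 < l) :
    ((fun i : Fin n => geomWeight (l - 1) ε r i) ᵥ* F) j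
      + K * excess (fun i : Fin n => geomWeight (l - 1) ε r i) j ≤ -ε := by
  obtain ⟨⟨hmetzler, hcol⟩, hupper, hout, -⟩ := hF
  set w : Fin n → ℝ := fun i => geomWeight (l - 1) ε r i
  set δ := ε * (r - 1) * r ^ (j : ℕ)
  have hδ₀ : 0 ≤ δ := by
    have := sub_nonneg.2 hr
    positivity
  have hvecMul : (w ᵥ* F) j ≤ w j * ∑ i, F i j + b * excess w j
      - δ * ∑ i ∈ univ.filter (fun i => j < i), F i j :=
    vecMul_apply_le_of_antitone
      ((geomWeight_antitone hε hr).comp_monotone Fin.val_strictMono.monotone)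
      (fun i => hmetzler i j) (fun i => hupper i j)
      fun i hi => geomWeight_le_sub hε hr (Nat.lt_sub_of_add_lt hj) hi
  have hwj : w j * ∑ i, F i j ≤ 0 :=
    mul_nonpos_of_nonneg_of_nonpos (zero_le_one.trans (one_le_geomWeight hε hr j)) (hcol j)
  have houtflow : δ * a₀ ≤ δ * ∑ i ∈ univ.filter (fun i => j < i), F i j :=
    mul_le_mul_of_nonneg_left ((ha _).trans (hout j hj)) hδ₀
  have hexcess : excess w j ≤ n * (ε * r ^ (j : ℕ)) := by
    have := excess_geomWeight_le (m := l - 1) hε (zero_le_one.trans hr) j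
    rwa [min_eq_left (Nat.le_sub_of_add_le hj.le)] at this
  calc (w ᵥ* F) j + K * excess w j ≤ (b + K) * excess w j - δ * a₀ := by linarith
    _ ≤ (b + K) * (n * (ε * r ^ (j : ℕ))) - δ * a₀ := by gcongr
    _ = -(ε * r ^ (j : ℕ)) := by linear_combination (-ε * r ^ (j : ℕ)) * hra
    _ ≤ -ε := neg_le_neg (le_mul_of_one_le_right hε (one_le_pow₀ hr))

lemma vecMul_geomWeight_le_of_ge (hF : MemCalF hl hln a b F) (hb : 0 ≤ b) (hK : 0 ≤ K)
    (ha₀ : 0 ≤ a₀) (ha : ∀ i, a₀ ≤ a i) (hε : 0 ≤ ε) (hr : 1 ≤ r)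
    (hεa : (b + K) * (n * (ε * r ^ (l - 1))) ≤ a₀ / 2) {j : Fin n} (hj : l - 1 ≤ (j : ℕ)) :
    ((fun i : Fin n => geomWeight (l - 1) ε r i) ᵥ* F) j
      + K * excess (fun i : Fin n => geomWeight (l - 1) ε r i) j ≤ -(a₀ / 2) := by
  obtain ⟨⟨hmetzler, -⟩, hupper, -, hcol⟩ := hF
  set w : Fin n → ℝ := fun i => geomWeight (l - 1) ε r i
  have hanti : Antitone w :=
    (geomWeight_antitone hε hr).comp_monotone Fin.val_strictMono.monotone
  have hvecMul : (w ᵥ* F) j ≤ w j * ∑ i, F i j + b * excess w j := by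
    simpa using vecMul_apply_le_of_antitone (δ := 0) hanti (fun i => hmetzler i j)
      (fun i => hupper i j) fun i hi => (hanti hi.le).trans_eq (sub_zero _).symm
  have hwj : 1 ≤ w j := one_le_geomWeight hε hr j
  have hloss : w j * ∑ i, F i j ≤ -a₀ :=
    calc w j * ∑ i, F i j ≤ w j * -a₀ :=
          mul_le_mul_of_nonneg_left ((hcol j hj).trans (neg_le_neg (ha _))) (zero_le_one.trans hwj)
      _ ≤ -a₀ := by linarith [le_mul_of_one_le_left ha₀ hwj]
  have hexcess : excess w j ≤ n * (ε * r ^ (l - 1)) := by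
    have := excess_geomWeight_le (m := l - 1) hε (zero_le_one.trans hr) j
    rwa [min_eq_right hj] at this
  calc (w ᵥ* F) j + K * excess w j ≤ -a₀ + (b + K) * excess w j := by linarith
    _ ≤ -a₀ + (b + K) * (n * (ε * r ^ (l - 1))) := by gcongr
    _ ≤ -(a₀ / 2) := by linarith

theorem exists_weight (hl : 1 < l) (hln : l ≤ n) (ha : ∀ i, 0 < a i) (hb : 0 ≤ b) (hK : 0 ≤ K) :
    ∃ (w : Fin n → ℝ) (W lam : ℝ), 0 < lam ∧ (∀ i, 1 ≤ w i) ∧ (∀ i, w i ≤ W) ∧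
      ∀ F, MemCalF hl hln a b F → ∀ j, (w ᵥ* F) j + K * excess w j ≤ -lam * w j := by
  have : Nonempty (Fin l) := ⟨⟨0, by omega⟩⟩
  obtain ⟨i₀, hi₀⟩ := Finite.exists_min a
  set a₀ := a i₀
  have ha₀ : 0 < a₀ := ha i₀
  set N : ℝ := (b + K) * n + 1
  have hN₀ : 0 < N := by positivity
  set r : ℝ := 1 + N / a₀ with hr_def
  have hr : 1 ≤ r := le_add_of_nonneg_right (by positivity)
  have hra : (r - 1) * a₀ = N := by rw [hr_def, add_sub_cancel_left, div_mul_cancel₀ _ ha₀.ne']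
  set ε : ℝ := a₀ / (2 * N * r ^ (l - 1)) with hε_def
  have hε : 0 < ε := by positivity
  have hNε : N * (ε * r ^ (l - 1)) = a₀ / 2 := by
    rw [hε_def]
    field_simp
  have hεa : (b + K) * (n * (ε * r ^ (l - 1))) ≤ a₀ / 2 := by
    have : 0 ≤ ε * r ^ (l - 1) := by positivity
    linarith
  set W : ℝ := 1 + ε * r ^ (l - 1)
  have hW : ∀ k, geomWeight (l - 1) ε r k ≤ W := geomWeight_le hε.le (zero_le_one.trans hr)
  have hW₀ : 0 < W := by positivity
  set μ := min ε (a₀ / 2)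
  have hμ : 0 < μ := lt_min hε (half_pos ha₀)
  have hrate : ∀ k, μ / W * geomWeight (l - 1) ε r k ≤ μ := fun k =>
    (mul_le_mul_of_nonneg_left (hW k) (by positivity)).trans_eq (div_mul_cancel₀ _ hW₀.ne')
  refine ⟨fun i => geomWeight (l - 1) ε r i, W, μ / W, div_pos hμ hW₀,
    fun i => one_le_geomWeight hε.le hr i, fun i => hW i, fun F hF j => ?_⟩
  rw [neg_mul]
  refine le_trans ?_ (neg_le_neg (hrate j))
  rcases lt_or_ge ((j : ℕ) + 1) l with hj | hj
  · exact (hF.vecMul_geomWeight_le_of_lt hb hK hi₀ hε.le hr hra hj).trans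
      (neg_le_neg (min_le_left _ _))
  · exact (hF.vecMul_geomWeight_le_of_ge hb hK ha₀.le hi₀ hε.le hr hεa
      (Nat.sub_le_of_le_add hj)).trans (neg_le_neg (min_le_right _ _))

end MemCalF

end GeometricWeights

section CompartmentalSystem

open Matrix

variable {n : ℕ} {c : Fin n → ℝ} {f0 : Fin n → ℝ → ℝ → ℝ} {fc : Fin n → Fin n → ℝ → ℝ → ℝ}
  {g Ienv : Fin n → ℝ → ℝ → ℝ}

/-- The structural assumptions on the system (S) that make its trajectories comparable in weighted
`1`-norms: signs and monotonicity as in (A1) and (A3)–(A6), and a constant `K` for which the flow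
from `j` to `i` is `K`-Lipschitz in the state of the receiving compartment `i`. -/
structure IsMonotoneCompartmental (c : Fin n → ℝ) (f0 : Fin n → ℝ → ℝ → ℝ)
    (fc : Fin n → Fin n → ℝ → ℝ → ℝ) (g Ienv : Fin n → ℝ → ℝ → ℝ) (K : ℝ) : Prop where
  f0_nonneg : ∀ t ≥ 0, ∀ i, ∀ x ∈ Set.Icc 0 (c i), 0 ≤ f0 i t x
  fc_nonneg : ∀ t ≥ 0, ∀ i j, i ≠ j → ∀ x ∈ Set.Icc 0 (c i), 0 ≤ fc i j t x
  g_nonneg : ∀ t ≥ 0, ∀ i, ∀ x ∈ Set.Icc 0 (c i), 0 ≤ g i t x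
  monotoneOn_f0 : ∀ t ≥ 0, ∀ i, MonotoneOn (f0 i t) (Set.Icc 0 (c i))
  antitoneOn_fc : ∀ t ≥ 0, ∀ i j, i ≠ j → AntitoneOn (fc i j t) (Set.Icc 0 (c i))
  antitoneOn_Ienv : ∀ t ≥ 0, ∀ i, AntitoneOn (Ienv i t) (Set.Icc 0 (c i))
  sub_le_g_sub : ∀ t ≥ 0, ∀ i, ∀ x y, 0 ≤ x → x ≤ y → y ≤ c i → y - x ≤ g i t y - g i t x
  abs_fc_sub_mul_g_le : ∀ t ≥ 0, ∀ i j, i ≠ j → ∀ x ∈ Set.Icc 0 (c i), ∀ y ∈ Set.Icc 0 (c i),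
    ∀ z ∈ Set.Icc 0 (c j), |fc i j t x - fc i j t y| * g j t z ≤ K * |x - y|

/-- `q` is a solution of `q̇ = Q(t, q)` on `[0, ∞)` that stays in the box `𝒳`. -/
def IsTrajectory (c : Fin n → ℝ) (f0 : Fin n → ℝ → ℝ → ℝ) (fc : Fin n → Fin n → ℝ → ℝ → ℝ)
    (g Ienv : Fin n → ℝ → ℝ → ℝ) (q : ℝ → Fin n → ℝ) : Prop :=
  ∀ t ≥ 0, q t ∈ boxIcc c ∧ HasDerivAt q (Qrhs f0 fc g Ienv t (q t)) t

lemma exists_nonneg_lipschitz_of_A1fun {ι : Type*} [Finite ι] {c : ι → ℝ} {h : ι → ℝ → ℝ → ℝ}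
    (hh : ∀ k, A1fun (c k) (h k)) :
    ∃ L ≥ 0, ∀ k, ∀ t ≥ 0, ∀ x ∈ Set.Icc 0 (c k), ∀ y ∈ Set.Icc 0 (c k),
      |h k t x - h k t y| ≤ L * |x - y| := by
  choose L hL using fun k => (hh k).2.2
  obtain ⟨C, hC⟩ := (Set.finite_range L).bddAbove
  refine ⟨|C|, abs_nonneg C, fun k t ht x hx y hy => (hL k t ht x hx y hy).trans ?_⟩
  gcongr
  exact (hC ⟨k, rfl⟩).trans (le_abs_self C)

theorem exists_isMonotoneCompartmental (hc : ∀ i, 0 ≤ c i)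
    (hf0 : ∀ i, A1fun (c i) (f0 i)) (hg : ∀ i, A1fun (c i) (g i))
    (hfc : ∀ i j, j ≠ i → A1fun (c i) (fc i j)) (hg0 : ∀ t ≥ 0, ∀ i, g i t 0 = 0)
    (hA3 : ∀ t ≥ 0, ∀ i, ∀ x y, 0 ≤ x → x ≤ y → y ≤ c i → y - x ≤ g i t y - g i t x)
    (hA4 : ∀ t ≥ 0, ∀ i j, j ≠ i → AntitoneOn (fc i j t) (Set.Icc 0 (c i)))
    (hA5 : ∀ t ≥ 0, ∀ i, MonotoneOn (f0 i t) (Set.Icc 0 (c i)))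
    (hA6 : ∀ t ≥ 0, ∀ i, AntitoneOn (Ienv i t) (Set.Icc 0 (c i))) :
    ∃ K ≥ 0, IsMonotoneCompartmental c f0 fc g Ienv K := by
  obtain ⟨Lg, hLg₀, hLg⟩ := exists_nonneg_lipschitz_of_A1fun hg
  obtain ⟨Lf, hLf₀, hLf⟩ := exists_nonneg_lipschitz_of_A1fun
    (ι := {p : Fin n × Fin n // p.2 ≠ p.1}) fun p => hfc p.1.1 p.1.2 p.2
  obtain ⟨C, hC⟩ := (Set.finite_range c).bddAbove
  have hg_le : ∀ t ≥ 0, ∀ j, ∀ z ∈ Set.Icc 0 (c j), g j t z ≤ Lg * |C| := fun t ht j z hz =>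
    calc g j t z ≤ Lg * |z| := by
          simpa [hg0 t ht j] using
            (le_abs_self _).trans (hLg j t ht z hz 0 (Set.left_mem_Icc.2 (hc j)))
      _ ≤ Lg * |C| := mul_le_mul_of_nonneg_left
          (abs_le_abs_of_nonneg hz.1 (hz.2.trans (hC ⟨j, rfl⟩))) hLg₀
  refine ⟨Lf * (Lg * |C|), by positivity,
    { f0_nonneg := fun t ht i => (hf0 i).2.1 t ht
      fc_nonneg := fun t ht i j hij => (hfc i j hij.symm).2.1 t ht
      g_nonneg := fun t ht i => (hg i).2.1 t ht
      monotoneOn_f0 := hA5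
      antitoneOn_fc := fun t ht i j hij => hA4 t ht i j hij.symm
      antitoneOn_Ienv := hA6
      sub_le_g_sub := hA3
      abs_fc_sub_mul_g_le := fun t ht i j hij x hx y hy z hz => ?_ }⟩
  calc |fc i j t x - fc i j t y| * g j t z ≤ Lf * |x - y| * (Lg * |C|) :=
        mul_le_mul (hLf ⟨(i, j), hij.symm⟩ t ht x hx y hy) (hg_le t ht j z hz)
          ((hg j).2.1 t ht z hz) (by positivity)
    _ = Lf * (Lg * |C|) * |x - y| := by ring

lemma Fmat_apply_of_ne {i j : Fin n} (hij : i ≠ j) (t : ℝ) (x : Fin n → ℝ) :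
    Fmat f0 fc t x i j = fc i j t (x i) := by
  simp [Fmat, hij]

lemma sum_Fmat_apply (t : ℝ) (x : Fin n → ℝ) (j : Fin n) :
    ∑ i, Fmat f0 fc t x i j = -f0 j t (x j) := by
  have hoff : ∑ i ∈ univ.erase j, Fmat f0 fc t x i j = ∑ i ∈ univ.erase j, fc i j t (x i) :=
    sum_congr rfl fun i hi => Fmat_apply_of_ne (ne_of_mem_erase hi) t x
  rw [← add_sum_erase univ _ (mem_univ j), hoff]
  simp [Fmat]

lemma Qrhs_eq_Fmat_mulVec_add (t : ℝ) (x : Fin n → ℝ) :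
    Qrhs f0 fc g Ienv t x =
      Fmat f0 fc t x *ᵥ (fun j => g j t (x j)) + fun i => Ienv i t (x i) := by
  ext i
  have hoff : ∑ j ∈ univ.erase i, Fmat f0 fc t x i j * g j t (x j) =
      ∑ j ∈ univ.erase i, fc i j t (x i) * g j t (x j) :=
    sum_congr rfl fun j hj => by rw [Fmat_apply_of_ne (ne_of_mem_erase hj).symm]
  rw [Pi.add_apply, mulVec, dotProduct, ← add_sum_erase univ _ (mem_univ i), hoff]
  simp only [Qrhs, Fmat, of_apply, if_true]
  ring

namespace IsMonotoneCompartmental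

variable {K t : ℝ} {x y : Fin n → ℝ}

lemma monotoneOn_g (h : IsMonotoneCompartmental c f0 fc g Ienv K) (ht : 0 ≤ t) (i : Fin n) :
    MonotoneOn (g i t) (Set.Icc 0 (c i)) := fun u hu v hv huv =>
  sub_nonneg.1 ((sub_nonneg.2 huv).trans (h.sub_le_g_sub t ht i u v hu.1 huv hv.2))

lemma abs_sub_le_abs_g_sub (h : IsMonotoneCompartmental c f0 fc g Ienv K) (ht : 0 ≤ t)
    (hx : x ∈ boxIcc c) (hy : y ∈ boxIcc c) (i : Fin n) :
    |x i - y i| ≤ |g i t (x i) - g i t (y i)| := by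
  rcases le_total (x i) (y i) with hxy | hxy
  · rw [abs_sub_comm, abs_sub_comm (g i t (x i)), abs_of_nonneg (sub_nonneg.2 hxy)]
    exact (h.sub_le_g_sub t ht i _ _ (hx i).1 hxy (hy i).2).trans (le_abs_self _)
  · rw [abs_of_nonneg (sub_nonneg.2 hxy)]
    exact (h.sub_le_g_sub t ht i _ _ (hy i).1 hxy (hx i).2).trans (le_abs_self _)

lemma sum_Fmat_apply_nonpos (h : IsMonotoneCompartmental c f0 fc g Ienv K) (ht : 0 ≤ t)
    (hx : x ∈ boxIcc c) (j : Fin n) : ∑ i, Fmat f0 fc t x i j ≤ 0 := by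
  rw [sum_Fmat_apply]
  exact neg_nonpos.2 (h.f0_nonneg t ht j _ (hx j))

lemma sum_mul_Fmat_sub_mulVec_le (h : IsMonotoneCompartmental c f0 fc g Ienv K) (ht : 0 ≤ t)
    (hx : x ∈ boxIcc c) (hy : y ∈ boxIcc c) {w s : Fin n → ℝ} (hw : 0 ≤ w)
    (hs : ∀ i, IsAbsSubgradient (s i) (x i - y i)) :
    ∑ i, w i * (s i * ((Fmat f0 fc t x - Fmat f0 fc t y) *ᵥ (fun j => g j t (y j))) i) ≤
      K * ∑ i, excess w i * |x i - y i| := by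
  refine sum_mul_mulVec_le_excess hw (fun j => h.g_nonneg t ht j _ (hy j))
    (fun i => (hs i).1) (fun i j hij => ?_) (fun j => ?_) fun i j hij => ?_
  · rw [Matrix.sub_apply, Fmat_apply_of_ne hij, Fmat_apply_of_ne hij]
    exact (hs i).mul_sub_eq_neg_abs (h.antitoneOn_fc t ht i j hij) (hx i) (hy i)
  · have hf0 := (hs j).mul_sub_eq_abs (h.monotoneOn_f0 t ht j) (hx j) (hy j)
    simp only [Matrix.sub_apply, sum_sub_distrib, sum_Fmat_apply]
    linarith [abs_nonneg (f0 j t (x j) - f0 j t (y j))]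
  · rw [Matrix.sub_apply, Fmat_apply_of_ne hij, Fmat_apply_of_ne hij]
    exact h.abs_fc_sub_mul_g_le t ht i j hij _ (hx i) _ (hy i) _ (hy j)

theorem sum_mul_Qrhs_sub_le (h : IsMonotoneCompartmental c f0 fc g Ienv K) (ht : 0 ≤ t)
    (hx : x ∈ boxIcc c) (hy : y ∈ boxIcc c) {w s : Fin n → ℝ} (hw : 0 ≤ w)
    (hs : ∀ i, IsAbsSubgradient (s i) (x i - y i)) :
    ∑ i, w i * (s i * (Qrhs f0 fc g Ienv t x - Qrhs f0 fc g Ienv t y) i) ≤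
      ∑ j, (w ᵥ* Fmat f0 fc t x) j * |g j t (x j) - g j t (y j)|
        + K * ∑ i, excess w i * |x i - y i| := by
  set Δg : Fin n → ℝ := fun j => g j t (x j) - g j t (y j)
  have hsplit : Qrhs f0 fc g Ienv t x - Qrhs f0 fc g Ienv t y =
      Fmat f0 fc t x *ᵥ Δg + (Fmat f0 fc t x - Fmat f0 fc t y) *ᵥ (fun j => g j t (y j))
        + fun i => Ienv i t (x i) - Ienv i t (y i) := by
    have hΔg : Δg = (fun j => g j t (x j)) - fun j => g j t (y j) := rfl
    rw [Qrhs_eq_Fmat_mulVec_add, Qrhs_eq_Fmat_mulVec_add, sub_mulVec, hΔg, mulVec_sub]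
    ext i
    simp only [Pi.add_apply, Pi.sub_apply]
    ring
  have htransport := sum_mul_mulVec_le_of_metzler (F := Fmat f0 fc t x) (v := Δg)
    (fun i j hij => (h.fc_nonneg t ht i j hij _ (hx i)).trans_eq (Fmat_apply_of_ne hij t x).symm)
    hw fun i => ⟨(hs i).1, (hs i).mul_sub_eq_abs (h.monotoneOn_g ht i) (hx i) (hy i)⟩
  have hrates := h.sum_mul_Fmat_sub_mulVec_le ht hx hy hw hs
  have hinflow : ∑ i, w i * (s i * (Ienv i t (x i) - Ienv i t (y i))) ≤ 0 :=
    sum_nonpos fun i _ => by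
      rw [(hs i).mul_sub_eq_neg_abs (h.antitoneOn_Ienv t ht i) (hx i) (hy i)]
      exact mul_nonpos_of_nonneg_of_nonpos (hw i) (neg_nonpos.2 (abs_nonneg _))
  simp only [hsplit, Pi.add_apply, mul_add, sum_add_distrib]
  linarith

lemma sum_mul_Qrhs_sub_le_neg_mul_weightedNorm (h : IsMonotoneCompartmental c f0 fc g Ienv K)
    (hK : 0 ≤ K) (ht : 0 ≤ t) (hx : x ∈ boxIcc c) (hy : y ∈ boxIcc c) {w s : Fin n → ℝ}
    (hw : 0 ≤ w) (hs : ∀ i, IsAbsSubgradient (s i) (x i - y i)) {lam : ℝ} (hlam : 0 ≤ lam)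
    (hF : ∀ j, (w ᵥ* Fmat f0 fc t x) j + K * excess w j ≤ -lam * w j) :
    ∑ i, w i * (s i * (Qrhs f0 fc g Ienv t x - Qrhs f0 fc g Ienv t y) i) ≤
      -lam * weightedNorm w (x - y) := by
  have hcol : ∀ j, (w ᵥ* Fmat f0 fc t x) j ≤ -(lam * w j + K * excess w j) := fun j => by
    linarith [hF j]
  have hcoeff : ∀ j, 0 ≤ lam * w j + K * excess w j := fun j =>
    add_nonneg (mul_nonneg hlam (hw j)) (mul_nonneg hK (excess_nonneg w j))
  calc ∑ i, w i * (s i * (Qrhs f0 fc g Ienv t x - Qrhs f0 fc g Ienv t y) i)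
      ≤ ∑ j, (w ᵥ* Fmat f0 fc t x) j * |g j t (x j) - g j t (y j)|
        + K * ∑ i, excess w i * |x i - y i| := h.sum_mul_Qrhs_sub_le ht hx hy hw hs
    _ ≤ ∑ j, -(lam * w j + K * excess w j) * |x j - y j| + K * ∑ i, excess w i * |x i - y i| := by
      refine add_le_add_left (sum_le_sum fun j _ => ?_) _
      exact (mul_le_mul_of_nonneg_right (hcol j) (abs_nonneg _)).trans
        (mul_le_mul_of_nonpos_left (h.abs_sub_le_abs_g_sub ht hx hy j)
          (neg_nonpos.2 (hcoeff j)))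
    _ = -lam * weightedNorm w (x - y) := by
      rw [weightedNorm, mul_sum, mul_sum, ← sum_add_distrib]
      exact sum_congr rfl fun j _ => by
        rw [Pi.sub_apply]
        ring

variable {p q : ℝ → Fin n → ℝ}

theorem weightedNorm_sub_le_exp_mul (h : IsMonotoneCompartmental c f0 fc g Ienv K) (hK : 0 ≤ K)
    (hp : IsTrajectory c f0 fc g Ienv p) (hq : IsTrajectory c f0 fc g Ienv q) {w : Fin n → ℝ}
    (hw : 0 ≤ w) {lam t₀ : ℝ} (hlam : 0 ≤ lam) (ht₀ : 0 ≤ t₀)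
    (hF : ∀ z ≥ t₀, ∀ j, (w ᵥ* Fmat f0 fc z (p z)) j + K * excess w j ≤ -lam * w j)
    (ht : t₀ ≤ t) :
    weightedNorm w (p t - q t) ≤ Real.exp (-lam * (t - t₀)) * weightedNorm w (p t₀ - q t₀) :=
  weightedNorm_le_exp_mul (d := fun z => p z - q z)
    (fun z hz => (hp z (ht₀.trans hz)).2.sub (hq z (ht₀.trans hz)).2)
    (fun z hz _ hs => h.sum_mul_Qrhs_sub_le_neg_mul_weightedNorm hK (ht₀.trans hz)
      (hp z (ht₀.trans hz)).1 (hq z (ht₀.trans hz)).1 hw hs hlam (hF z hz)) ht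

theorem onenorm_sub_le (h : IsMonotoneCompartmental c f0 fc g Ienv K) (hK : 0 ≤ K)
    (hp : IsTrajectory c f0 fc g Ienv p) (hq : IsTrajectory c f0 fc g Ienv q) (ht : 0 ≤ t) :
    onenorm (p t - q t) ≤ onenorm (p 0 - q 0) := by
  have hF : ∀ z ≥ 0, ∀ j, ((1 : Fin n → ℝ) ᵥ* Fmat f0 fc z (p z)) j + K * excess 1 j ≤
      -0 * (1 : Fin n → ℝ) j := fun z hz j => by
    simpa [vecMul, dotProduct, excess_one] using h.sum_Fmat_apply_nonpos hz (hp z hz).1 j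
  simpa [onenorm_eq_weightedNorm] using
    h.weightedNorm_sub_le_exp_mul hK hp hq zero_le_one le_rfl le_rfl hF ht

end IsMonotoneCompartmental

end CompartmentalSystem

theorem stmt15_general {n l : ℕ} (hl : 1 < l) (hln : l ≤ n) {a : Fin l → ℝ} (ha : ∀ i, 0 < a i)
    {b : ℝ} (hb : 0 ≤ b) {c : Fin n → ℝ} {f0 : Fin n → ℝ → ℝ → ℝ}
    {fc : Fin n → Fin n → ℝ → ℝ → ℝ} {g Ienv : Fin n → ℝ → ℝ → ℝ} {K : ℝ} (hK : 0 ≤ K)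
    (h : IsMonotoneCompartmental c f0 fc g Ienv K) {τ : ℝ} (hτ : 0 ≤ τ) :
    ∃ lam : ℝ, 0 < lam ∧ ∃ γ : ℝ, 1 ≤ γ ∧ ∀ p q : ℝ → Fin n → ℝ,
      IsTrajectory c f0 fc g Ienv p → IsTrajectory c f0 fc g Ienv q →
      (∀ t ≥ τ, MemCalF hl hln a b (Fmat f0 fc t (p t))) →
      ∀ t ≥ (0 : ℝ), onenorm (p t - q t) ≤ γ * Real.exp (-lam * t) * onenorm (p 0 - q 0) := by
  obtain ⟨w, W, lam, hlam, hw, hwW, hF⟩ := MemCalF.exists_weight hl hln ha hb hK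
  have hW : 1 ≤ W := (hw ⟨0, by omega⟩).trans (hwW ⟨0, by omega⟩)
  have hexp : 1 ≤ Real.exp (lam * τ) := Real.one_le_exp (mul_nonneg hlam.le hτ)
  refine ⟨lam, hlam, W * Real.exp (lam * τ), one_le_mul_of_one_le_of_one_le hW hexp,
    fun p q hp hq hmem t ht => ?_⟩
  refine le_mul_exp_mul_of_le_of_le_mul_exp (u := fun t => onenorm (p t - q t)) hW hlam.le hτ
    (sum_nonneg fun _ _ => abs_nonneg _) (fun t ht => h.onenorm_sub_le hK hp hq ht)
    (fun t ht => ?_) ht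
  calc onenorm (p t - q t) ≤ weightedNorm w (p t - q t) := by
        rw [onenorm_eq_weightedNorm]
        exact weightedNorm_mono hw _
    _ ≤ Real.exp (-lam * (t - τ)) * weightedNorm w (p τ - q τ) :=
        h.weightedNorm_sub_le_exp_mul hK hp hq (zero_le_one.trans hw) hlam.le hτ
          (fun z hz => hF _ (hmem z hz)) ht
    _ ≤ Real.exp (-lam * (t - τ)) * weightedNorm (W • 1) (p τ - q τ) := by
        gcongr
        exact weightedNorm_mono (fun i => by simpa using hwW i) _
    _ = W * (Real.exp (-lam * (t - τ)) * onenorm (p τ - q τ)) := by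
        rw [weightedNorm_smul, onenorm_eq_weightedNorm, mul_left_comm]

/-- under (A1)–(A7), if there are a box `S ⊆ 𝒳` and a time
`τ ≥ 0` such that every solution enters `S` after time `τ` and
`F(t,x) ∈ ℱ(a,b,l)` for `t ≥ τ`, `x ∈ S`, then the system (S) is incrementally
exponentially stable with respect to `𝒳`. -/
theorem stmt15 (n l : ℕ) (hn : 0 < n) (hl : 1 < l) (hln : l ≤ n)
    (a : Fin l → ℝ) (ha : ∀ i, 0 < a i) (b : ℝ) (hb : 0 ≤ b)
    (c : Fin n → ℝ) (hc : ∀ i, 0 < c i)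
    (f0 : Fin n → ℝ → ℝ → ℝ) (fc : Fin n → Fin n → ℝ → ℝ → ℝ)
    (g Ienv : Fin n → ℝ → ℝ → ℝ)
    (hA1 : (∀ i, A1fun (c i) (f0 i)) ∧ (∀ i, A1fun (c i) (g i)) ∧
      (∀ i, A1fun (c i) (Ienv i)) ∧ ∀ i j, j ≠ i → A1fun (c i) (fc i j))
    (hA2 : ∀ t ≥ (0 : ℝ), ∀ i, Ienv i t 0 = 0 ∧ Ienv i t (c i) = 0 ∧
      g i t 0 = 0 ∧ ∀ j, j ≠ i → fc i j t (c i) = 0)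
    (hA3 : ∀ t ≥ (0 : ℝ), ∀ i, ∀ xi yi : ℝ, 0 ≤ xi → xi ≤ yi → yi ≤ c i →
      yi - xi ≤ g i t yi - g i t xi)
    (hA4 : ∀ t ≥ (0 : ℝ), ∀ i j, j ≠ i → AntitoneOn (fc i j t) (Set.Icc 0 (c i)))
    (hA5 : ∀ t ≥ (0 : ℝ), ∀ i, MonotoneOn (f0 i t) (Set.Icc 0 (c i)))
    (hA6 : ∀ t ≥ (0 : ℝ), ∀ i, AntitoneOn (Ienv i t) (Set.Icc 0 (c i)))
    -- (A7): existence and uniqueness of solutions in `𝒳` from any initial data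
    (hA7 : ∀ τ ≥ (0 : ℝ), ∀ ξ ∈ boxIcc c, ∃ q : ℝ → Fin n → ℝ,
      (q τ = ξ ∧ ∀ t ≥ τ, q t ∈ boxIcc c ∧
        HasDerivAt q (Qrhs f0 fc g Ienv t (q t)) t) ∧
      ∀ q' : ℝ → Fin n → ℝ,
        (q' τ = ξ ∧ ∀ t ≥ τ, q' t ∈ boxIcc c ∧
          HasDerivAt q' (Qrhs f0 fc g Ienv t (q' t)) t) →
        ∀ t ≥ τ, q' t = q t)
    -- the flow from time `0`
    (φ : ℝ → (Fin n → ℝ) → (Fin n → ℝ))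
    (hφ : ∀ ξ ∈ boxIcc c, φ 0 ξ = ξ ∧ ∀ t ≥ (0 : ℝ), φ t ξ ∈ boxIcc c ∧
      HasDerivAt (fun s => φ s ξ) (Qrhs f0 fc g Ienv t (φ t ξ)) t)
    -- the box `S ⊆ 𝒳` and the time `τ`
    (Si : Fin n → Set ℝ) (hSi : ∀ i, (Si i).OrdConnected)
    (S : Set (Fin n → ℝ)) (hS : S = {x : Fin n → ℝ | ∀ i, x i ∈ Si i})
    (hSsub : S ⊆ boxIcc c)
    (τ : ℝ) (hτ : 0 ≤ τ)
    (hreach : ∀ t ≥ τ, ∀ ξ ∈ boxIcc c, φ t ξ ∈ S)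
    (hFF : ∀ t ≥ τ, ∀ x ∈ S, MemCalF hl hln a b (Fmat f0 fc t x)) :
    ∃ lam : ℝ, 0 < lam ∧ ∃ γ : ℝ, 1 ≤ γ ∧
      ∀ ξ₁ ∈ boxIcc c, ∀ ξ₂ ∈ boxIcc c, ∀ t ≥ (0 : ℝ),
        onenorm (φ t ξ₁ - φ t ξ₂) ≤ γ * Real.exp (-lam * t) * onenorm (ξ₁ - ξ₂) := by
  obtain ⟨hf0, hg, -, hfc⟩ := hA1
  obtain ⟨K, hK, h⟩ := exists_isMonotoneCompartmental (fun i => (hc i).le) hf0 hg hfc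
    (fun t ht i => (hA2 t ht i).2.2.1) hA3 hA4 hA5 hA6
  obtain ⟨lam, hlam, γ, hγ, hdecay⟩ := stmt15_general hl hln ha hb hK h hτ
  refine ⟨lam, hlam, γ, hγ, fun ξ₁ h₁ ξ₂ h₂ t ht => ?_⟩
  simpa only [(hφ ξ₁ h₁).1, (hφ ξ₂ h₂).1] using
    hdecay (φ · ξ₁) (φ · ξ₂) (hφ ξ₁ h₁).2 (hφ ξ₂ h₂).2
      (fun t ht => hFF t ht _ (hreach t ht ξ₁ h₁)) t ht
end

section
/- Consider the compartmental system (S) on the box 𝒳 = [0,c₁] × ⋯ × [0,cₙ] satisfying assumptions (A1)–(A7), with flow φ(t,ξ) denoting the unique solution with φ(0,ξ) = ξ ∈ 𝒳. Suppose there exist a constant aₙ > 0 and, for each i = 2,…,n, a nonincreasing function h_i : [0,c_i] → ℝ such that f_{0n}(t,xₙ) ≥ aₙ for all t ≥ 0 and xₙ ∈ [0,cₙ], and f_{i,i−1}(t,x_i) ≥ h_i(x_i) > 0 for all t ≥ 0 and x_i ∈ [0,c_i), i = 2,…,n. Then (S) is incrementally exponentially stable with respect to 𝒳: there exist λ > 0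 and γ ≥ 1 such that |φ(t,ξ¹) − φ(t,ξ²)|₁ ≤ γ e^{−λ t} |ξ¹ − ξ²|₁ for all ξ¹, ξ² ∈ 𝒳 and all t ≥ 0. -/
open Finset

/-!
Since each flux increases with the content of its donor and decreases with that of its recipient,
the `ℓ¹` distance of two solutions never increases. Exponential decay comes from the chain
`0 → 1 → ⋯ → n - 1 → environment`: the last compartment leaks at a positive rate, hence after a
finite time it stays below its capacity by a fixed amount, hence it accepts mass from its
predecessor at a positive rate, and so on down to the first compartment. Once every chain rate is
bounded below, an `ℓ¹` distance whose weights decrease suitably along the chain decays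
exponentially, because each step along the chain loses more weight than all other exchanges can
restore.
-/

section

open Filter Topology NNReal

/-- `s` is a subgradient of the absolute value at `z`. The right derivative of `|z|` along a
curve is `s * z'` for such an `s`, so that bounds valid for every subgradient control `|z|`. -/
structure IsAbsSubgradient_s16 (s z : ℝ) : Prop where
  abs_le_one : |s| ≤ 1
  mul_eq_abs : s * z = |z|

namespace IsAbsSubgradient_s16

variable {s a b : ℝ} {f : ℝ → ℝ} {S : Set ℝ}

theorem mul_le_abs (hs : IsAbsSubgradient_s16 s a) (z : ℝ) : s * z ≤ |z| :=
  calc s * z ≤ |s| * |z| := (le_abs_self _).trans_eq (abs_mul s z)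
    _ ≤ |z| := mul_le_of_le_one_left (abs_nonneg z) hs.abs_le_one

theorem sub_of_monotoneOn (hs : IsAbsSubgradient_s16 s (a - b)) (hf : MonotoneOn f S)
    (ha : a ∈ S) (hb : b ∈ S) : IsAbsSubgradient_s16 s (f a - f b) := by
  refine ⟨hs.abs_le_one, ?_⟩
  have hsab := hs.mul_eq_abs
  rcases lt_trichotomy a b with hab | rfl | hab
  · have hs_neg : s = -1 := by
      rw [abs_of_neg (sub_neg.2 hab), ← neg_one_mul] at hsab
      exact mul_right_cancel₀ (sub_neg.2 hab).ne hsab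
    rw [hs_neg, neg_one_mul, abs_of_nonpos (sub_nonpos.2 (hf ha hb hab.le))]
  · simp
  · have hs_pos : s = 1 := by
      rw [abs_of_pos (sub_pos.2 hab), mul_eq_right₀ (sub_pos.2 hab).ne'] at hsab
      exact hsab
    rw [hs_pos, one_mul, abs_of_nonneg (sub_nonneg.2 (hf hb ha hab.le))]

theorem sub_of_antitoneOn (hs : IsAbsSubgradient_s16 s (a - b)) (hf : AntitoneOn f S)
    (ha : a ∈ S) (hb : b ∈ S) : IsAbsSubgradient_s16 s (f b - f a) := by
  simpa [neg_add_eq_sub] using hs.sub_of_monotoneOn hf.neg ha hb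

end IsAbsSubgradient_s16

theorem exists_isAbsSubgradient_hasDerivWithinAt_abs_s16 {u : ℝ → ℝ} {v t : ℝ}
    (hu : HasDerivWithinAt u v (Set.Ici t) t) :
    ∃ s, IsAbsSubgradient_s16 s (u t) ∧ HasDerivWithinAt (fun r => |u r|) (s * v) (Set.Ici t) t := by
  rcases lt_trichotomy (u t) 0 with hneg | hzero | hpos
  · exact ⟨-1, ⟨by simp, by simp [abs_of_neg hneg]⟩,
      (hasDerivAt_abs_neg hneg).comp_hasDerivWithinAt t hu⟩
  · refine ⟨SignType.sign v, ⟨?_, by simp [hzero]⟩, ?_⟩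
    · rcases lt_trichotomy v 0 with hv | rfl | hv <;> simp [*]
    · rw [sign_mul_self]
      rw [hasDerivWithinAt_iff_tendsto_slope] at hu ⊢
      refine hu.abs.congr' ?_
      filter_upwards [self_mem_nhdsWithin] with r hr
      simp [slope_def_field, hzero, abs_div, abs_of_nonneg (sub_nonneg.2 (Set.mem_Ici.1 hr.1))]
  · exact ⟨1, ⟨by simp, by simp [abs_of_pos hpos]⟩,
      (hasDerivAt_abs_pos hpos).comp_hasDerivWithinAt t hu⟩

theorem le_mul_exp_of_hasDerivWithinAt_le {f f' : ℝ → ℝ} {a K : ℝ}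
    (hcont : ContinuousOn f (Set.Ici a))
    (hderiv : ∀ t ≥ a, HasDerivWithinAt f (f' t) (Set.Ici t) t)
    (hle : ∀ t ≥ a, f' t ≤ K * f t) : ∀ t ≥ a, f t ≤ f a * Real.exp (K * (t - a)) := by
  intro t ht
  have hgronwall := le_gronwallBound_of_liminf_deriv_right_le (δ := f a) (K := K) (ε := 0) (b := t)
    (hcont.mono Set.Icc_subset_Ici_self)
    (fun x hx r hr => (hderiv x hx.1).liminf_right_slope_le hr) le_rfl
    (fun x hx => by simpa using hle x hx.1) t ⟨ht, le_rfl⟩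
  simpa [gronwallBound_ε0] using hgronwall

theorem sum_mul_abs_le_mul_exp {ι : Type*} [Fintype ι] {q q' : ℝ → ι → ℝ} {w : ι → ℝ} {a K : ℝ}
    (hq : ∀ t ≥ a, HasDerivWithinAt q (q' t) (Set.Ici a) t)
    (hK : ∀ t ≥ a, ∀ s : ι → ℝ, (∀ i, IsAbsSubgradient_s16 (s i) (q t i)) →
      ∑ i, w i * (s i * q' t i) ≤ K * ∑ i, w i * |q t i|) :
    ∀ t ≥ a, ∑ i, w i * |q t i| ≤ (∑ i, w i * |q a i|) * Real.exp (K * (t - a)) := by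
  have hderiv : ∀ t ≥ a, ∀ i, HasDerivWithinAt (fun r => q r i) (q' t i) (Set.Ici a) t :=
    fun t ht => hasDerivWithinAt_pi.1 (hq t ht)
  choose! s hs using fun t (ht : t ≥ a) i => exists_isAbsSubgradient_hasDerivWithinAt_abs_s16
    ((hderiv t ht i).mono (Set.Ici_subset_Ici.2 ht))
  refine le_mul_exp_of_hasDerivWithinAt_le (f' := fun t => ∑ i, w i * (s t i * q' t i)) ?_ ?_ ?_
  · exact continuousOn_finsetSum _ fun i _ t ht =>
      ((hderiv t ht i).continuousWithinAt.abs).const_mul (w i)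
  · exact fun t ht => HasDerivWithinAt.fun_sum fun i _ => ((hs t ht i).2).const_mul (w i)
  · exact fun t ht => hK t ht (s t) fun i => (hs t ht i).1

theorem exists_lt_forall_le_of_deriv_le {a b c : ℝ} (ha : 0 < a) (hb : 0 ≤ b) (hc : 0 < c) :
    ∃ U ∈ Set.Ico 0 c, ∀ (u u' : ℝ → ℝ) (T : ℝ),
      (∀ t ≥ T, HasDerivWithinAt u (u' t) (Set.Ici T) t) → u T ≤ c →
      (∀ t ≥ T, u' t ≤ b * (c - u t) - a * u t) → ∀ t ≥ T + 1, u t ≤ U := by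
  -- the equilibrium of the comparison equation `u' = b (c - u) - a u`
  set m := b * c / (a + b) with hm
  have hab : 0 < a + b := by positivity
  have hm_mul : (a + b) * m = b * c := mul_div_cancel₀ _ hab.ne'
  have hm_nonneg : 0 ≤ m := by positivity
  have hm_lt : m < c := by rw [hm, div_lt_iff₀ hab]; nlinarith
  have hexp_lt : Real.exp (-(a + b)) < 1 := Real.exp_lt_one_iff.2 (by linarith)
  refine ⟨m + (c - m) * Real.exp (-(a + b)), ⟨?_, ?_⟩, fun u u' T hu huT hle t ht => ?_⟩
  · exact add_nonneg hm_nonneg (mul_nonneg (sub_pos.2 hm_lt).le (Real.exp_pos _).le)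
  · nlinarith
  have hshift : ∀ t ≥ T, HasDerivWithinAt (fun r => u r - m) (u' t) (Set.Ici T) t :=
    fun t ht => (hu t ht).sub_const m
  have hdecay : u t - m ≤ (u T - m) * Real.exp (-(a + b) * (t - T)) :=
    le_mul_exp_of_hasDerivWithinAt_le (f := fun r => u r - m)
      (fun t ht => (hshift t ht).continuousWithinAt)
      (fun t ht => (hshift t ht).mono (Set.Ici_subset_Ici.2 ht))
      (fun t ht => by linarith [hle t ht]) t (by linarith)
  have hexp_le : Real.exp (-(a + b) * (t - T)) ≤ Real.exp (-(a + b)) :=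
    Real.exp_le_exp.2 (by nlinarith)
  have := mul_le_mul (sub_le_sub_right huT m) hexp_le (Real.exp_pos _).le (sub_pos.2 hm_lt).le
  linarith

-- With `w k = R ^ n - R ^ k` the drop `w k - w (k + 1)` is `R - 1` times `R ^ k`, which dominates
-- `w 0 - w k`; so a large ratio `R` makes the coefficient negative.
theorem exists_weights {B κ : ℝ} (hB : 0 ≤ B) (hκ : 0 < κ) (n : ℕ) :
    ∃ w : ℕ → ℝ, Antitone w ∧ 0 ≤ w n ∧ ∃ lam > 0, ∃ γ ≥ 1, ∀ k < n, 1 ≤ w k ∧ w k ≤ γ ∧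
      B * (w 0 - w k) - κ * (w k - w (k + 1)) ≤ -lam * w k := by
  set R := 2 + B / κ with hR
  have hR_two : 2 ≤ R := by rw [hR]; linarith [div_nonneg hB hκ.le]
  have hRκ : κ * (R - 1) = κ + B := by rw [hR]; field_simp; ring
  have hpow_mono : Monotone fun k : ℕ => R ^ k := pow_right_mono₀ (by linarith)
  have hone_le_pow : ∀ k : ℕ, 1 ≤ R ^ k := fun k => one_le_pow₀ (by linarith)
  have hpow_pos : 0 < R ^ n := by positivity
  refine ⟨fun k => R ^ n - R ^ k, fun i j hij => sub_le_sub_left (hpow_mono hij) _,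
    by simp, κ / R ^ n, by positivity, R ^ n, hone_le_pow n, fun k hk => ⟨?_, ?_, ?_⟩⟩
  · have hstep : R * R ^ k ≤ R ^ n := pow_succ' R k ▸ hpow_mono hk
    nlinarith [hone_le_pow k]
  · linarith [hone_le_pow k]
  · have hrate : κ / R ^ n * (R ^ n - R ^ k) ≤ κ := by
      rw [div_mul_eq_mul_div, div_le_iff₀ hpow_pos]
      nlinarith [hone_le_pow k]
    calc B * (R ^ n - R ^ 0 - (R ^ n - R ^ k)) - κ * (R ^ n - R ^ k - (R ^ n - R ^ (k + 1)))
        = B * (R ^ k - 1) - κ * (R - 1) * R ^ k := by ring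
      _ = -B - κ * R ^ k := by rw [hRκ]; ring
      _ ≤ -κ := by nlinarith [hone_le_pow k]
      _ ≤ -(κ / R ^ n) * (R ^ n - R ^ k) := by linarith

variable {n : ℕ} {c : Fin n → ℝ} {f0 : Fin n → ℝ → ℝ → ℝ} {fc : Fin n → Fin n → ℝ → ℝ → ℝ}
  {g Ienv : Fin n → ℝ → ℝ → ℝ} {L : ℝ≥0} {t κ : ℝ} {x y s : Fin n → ℝ} {w : ℕ → ℝ}

/-- The time-`t` coefficients of (S) obey (A1)–(A6) with Lipschitz constant `L`, where (A1) is
weakened to `f0 ≥ 0` and Lipschitz continuity of `fc`, `g` and `Ienv`, and `Ienv i t 0 = 0` is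
dropped from (A2). -/
structure CompartmentalAt (c : Fin n → ℝ) (f0 : Fin n → ℝ → ℝ → ℝ)
    (fc : Fin n → Fin n → ℝ → ℝ → ℝ) (g Ienv : Fin n → ℝ → ℝ → ℝ) (L : ℝ≥0) (t : ℝ) : Prop where
  f0_nonneg : ∀ i, ∀ a ∈ Set.Icc 0 (c i), 0 ≤ f0 i t a
  f0_monotoneOn : ∀ i, MonotoneOn (f0 i t) (Set.Icc 0 (c i))
  fc_lipschitzOnWith : ∀ i j, j ≠ i → LipschitzOnWith L (fc i j t) (Set.Icc 0 (c i))
  fc_antitoneOn : ∀ i j, j ≠ i → AntitoneOn (fc i j t) (Set.Icc 0 (c i))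
  fc_capacity : ∀ i j, j ≠ i → fc i j t (c i) = 0
  g_lipschitzOnWith : ∀ i, LipschitzOnWith L (g i t) (Set.Icc 0 (c i))
  g_expanding : ∀ i, ∀ a ∈ Set.Icc 0 (c i), ∀ b ∈ Set.Icc 0 (c i), a ≤ b → b - a ≤ g i t b - g i t a
  g_zero : ∀ i, g i t 0 = 0
  inflow_lipschitzOnWith : ∀ i, LipschitzOnWith L (Ienv i t) (Set.Icc 0 (c i))
  inflow_antitoneOn : ∀ i, AntitoneOn (Ienv i t) (Set.Icc 0 (c i))
  inflow_capacity : ∀ i, Ienv i t (c i) = 0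

/-- A common Lipschitz constant, on the box, of the fluxes `fc i j t (x i) * g j t (x j)` in each of
their two variables. -/
def fluxLipschitz (c : Fin n → ℝ) (L : ℝ≥0) : ℝ := L * (L * ‖c‖)

/-- The rate at which compartment `k` empties into the next one along the chain
`0 → 1 → ⋯ → n - 1 → environment`. -/
def chainRate (f0 : Fin n → ℝ → ℝ → ℝ) (fc : Fin n → Fin n → ℝ → ℝ → ℝ) (t : ℝ) (x : Fin n → ℝ)
    (k : Fin n) : ℝ :=
  if hk : (k : ℕ) + 1 < n then fc ⟨k + 1, hk⟩ k t (x ⟨k + 1, hk⟩) else f0 k t (x k)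

/-- The net rate at which compartment `i` gains mass from the environment when its content is `a`,
so that the remaining terms of `Qrhs` are fluxes between compartments. -/
def environmentExchange (f0 g Ienv : Fin n → ℝ → ℝ → ℝ) (t : ℝ) (i : Fin n) (a : ℝ) : ℝ :=
  Ienv i t a - f0 i t a * g i t a

theorem fluxLipschitz_nonneg (c : Fin n → ℝ) (L : ℝ≥0) : 0 ≤ fluxLipschitz c L := by
  unfold fluxLipschitz
  positivity

theorem sum_le_mul_of_forall_le {S : Finset (Fin n)} {f : Fin n → ℝ} {B : ℝ} (hB : 0 ≤ B)
    (hf : ∀ i ∈ S, f i ≤ B) : ∑ i ∈ S, f i ≤ n * B :=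
  calc ∑ i ∈ S, f i ≤ #S • B := sum_le_card_nsmul S f B hf
    _ = #S * B := nsmul_eq_mul _ _
    _ ≤ n * B := by
      gcongr
      simpa using card_le_univ S

theorem abs_sub_le_of_lipschitzOnWith {f : ℝ → ℝ} {S : Set ℝ} {a b : ℝ} (hf : LipschitzOnWith L f S)
    (ha : a ∈ S) (hb : b ∈ S) : |f a - f b| ≤ L * |a - b| := by
  simpa only [Real.dist_eq] using hf.dist_le_mul a ha b hb

theorem le_norm_of_mem_Icc {i : Fin n} {a : ℝ} (ha : a ∈ Set.Icc 0 (c i)) : a ≤ ‖c‖ :=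
  ha.2.trans ((le_abs_self _).trans (norm_le_pi_norm c i))

theorem sub_le_norm_of_mem_Icc {i : Fin n} {a : ℝ} (ha : a ∈ Set.Icc 0 (c i)) : c i - a ≤ ‖c‖ :=
  le_norm_of_mem_Icc ⟨sub_nonneg.2 ha.2, sub_le_self _ ha.1⟩

namespace CompartmentalAt

variable {i j k : Fin n} {a b : ℝ}

theorem g_monotoneOn (H : CompartmentalAt c f0 fc g Ienv L t) (i : Fin n) :
    MonotoneOn (g i t) (Set.Icc 0 (c i)) :=
  fun a ha b hb hab => by linarith [H.g_expanding i a ha b hb hab]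

theorem le_g (H : CompartmentalAt c f0 fc g Ienv L t) (ha : a ∈ Set.Icc 0 (c i)) :
    a ≤ g i t a := by
  simpa [H.g_zero i] using H.g_expanding i 0 ⟨le_rfl, ha.1.trans ha.2⟩ a ha ha.1

theorem g_nonneg (H : CompartmentalAt c f0 fc g Ienv L t) (ha : a ∈ Set.Icc 0 (c i)) :
    0 ≤ g i t a :=
  ha.1.trans (H.le_g ha)

theorem abs_sub_le_abs_g_sub (H : CompartmentalAt c f0 fc g Ienv L t) (ha : a ∈ Set.Icc 0 (c i))
    (hb : b ∈ Set.Icc 0 (c i)) : |a - b| ≤ |g i t a - g i t b| := by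
  wlog hab : b ≤ a generalizing a b
  · rw [abs_sub_comm a b, abs_sub_comm (g i t a)]
    exact this hb ha (le_of_not_ge hab)
  · rw [abs_of_nonneg (sub_nonneg.2 hab)]
    exact (H.g_expanding i b hb a ha hab).trans (le_abs_self _)

theorem fc_nonneg (H : CompartmentalAt c f0 fc g Ienv L t) (hij : j ≠ i)
    (ha : a ∈ Set.Icc 0 (c i)) : 0 ≤ fc i j t a :=
  (H.fc_capacity i j hij).symm.trans_le
    (H.fc_antitoneOn i j hij ha ⟨ha.1.trans ha.2, le_rfl⟩ ha.2)

theorem fc_le (H : CompartmentalAt c f0 fc g Ienv L t) (hij : j ≠ i)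
    (ha : a ∈ Set.Icc 0 (c i)) : fc i j t a ≤ L * (c i - a) := by
  have hlip := abs_sub_le_of_lipschitzOnWith (H.fc_lipschitzOnWith i j hij) ha
    ⟨ha.1.trans ha.2, le_rfl⟩
  rwa [H.fc_capacity i j hij, sub_zero, abs_of_nonneg (H.fc_nonneg hij ha), abs_sub_comm,
    abs_of_nonneg (sub_nonneg.2 ha.2)] at hlip

theorem inflow_le (H : CompartmentalAt c f0 fc g Ienv L t) (ha : a ∈ Set.Icc 0 (c i)) :
    Ienv i t a ≤ L * (c i - a) := by
  have hlip := abs_sub_le_of_lipschitzOnWith (H.inflow_lipschitzOnWith i) ha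
    ⟨ha.1.trans ha.2, le_rfl⟩
  rw [H.inflow_capacity i, sub_zero, abs_sub_comm, abs_of_nonneg (sub_nonneg.2 ha.2)] at hlip
  exact (le_abs_self _).trans hlip

theorem g_le (H : CompartmentalAt c f0 fc g Ienv L t) (ha : a ∈ Set.Icc 0 (c i)) :
    g i t a ≤ L * ‖c‖ := by
  have hlip := abs_sub_le_of_lipschitzOnWith (H.g_lipschitzOnWith i) ha ⟨le_rfl, ha.1.trans ha.2⟩
  rw [H.g_zero i, sub_zero, sub_zero, abs_of_nonneg ha.1] at hlip
  calc g i t a ≤ L * a := (le_abs_self _).trans hlip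
    _ ≤ L * ‖c‖ := by gcongr; exact le_norm_of_mem_Icc ha

theorem fc_mul_abs_g_sub_le (H : CompartmentalAt c f0 fc g Ienv L t) (hx : x ∈ boxIcc c)
    (hy : y ∈ boxIcc c) (hij : j ≠ i) :
    fc i j t (x i) * |g j t (x j) - g j t (y j)| ≤ fluxLipschitz c L * |x j - y j| := by
  have hfc : fc i j t (x i) ≤ L * ‖c‖ := (H.fc_le hij (hx i)).trans
    (mul_le_mul_of_nonneg_left (sub_le_norm_of_mem_Icc (hx i)) L.coe_nonneg)
  calc fc i j t (x i) * |g j t (x j) - g j t (y j)| ≤ (L * ‖c‖) * (L * |x j - y j|) :=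
        mul_le_mul hfc (abs_sub_le_of_lipschitzOnWith (H.g_lipschitzOnWith j) (hx j) (hy j))
          (abs_nonneg _) (by positivity)
    _ = fluxLipschitz c L * |x j - y j| := by unfold fluxLipschitz; ring

theorem abs_fc_sub_mul_g_le (H : CompartmentalAt c f0 fc g Ienv L t) (hx : x ∈ boxIcc c)
    (hy : y ∈ boxIcc c) (hij : j ≠ i) :
    |fc i j t (x i) - fc i j t (y i)| * g j t (y j) ≤ fluxLipschitz c L * |x i - y i| :=
  calc |fc i j t (x i) - fc i j t (y i)| * g j t (y j) ≤ (L * |x i - y i|) * (L * ‖c‖) :=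
        mul_le_mul (abs_sub_le_of_lipschitzOnWith (H.fc_lipschitzOnWith i j hij) (hx i) (hy i))
          (H.g_le (hy j)) (H.g_nonneg (hy j)) (by positivity)
    _ = fluxLipschitz c L * |x i - y i| := by unfold fluxLipschitz; ring

theorem chainRate_nonneg (H : CompartmentalAt c f0 fc g Ienv L t) (hx : x ∈ boxIcc c)
    (k : Fin n) : 0 ≤ chainRate f0 fc t x k := by
  unfold chainRate
  split_ifs with hk
  · exact H.fc_nonneg (by simp [Fin.ext_iff]) (hx _)
  · exact H.f0_nonneg k _ (hx k)

theorem chainRate_le_total_outflow (H : CompartmentalAt c f0 fc g Ienv L t) (hx : x ∈ boxIcc c)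
    (k : Fin n) : chainRate f0 fc t x k ≤ f0 k t (x k) + ∑ j ∈ univ.erase k, fc j k t (x j) := by
  have hfc : ∀ j ∈ univ.erase k, 0 ≤ fc j k t (x j) :=
    fun j hj => H.fc_nonneg (ne_of_mem_erase hj).symm (hx j)
  unfold chainRate
  split_ifs with hk
  · have hmem : (⟨k + 1, hk⟩ : Fin n) ∈ univ.erase k := by simp [Fin.ext_iff]
    exact (single_le_sum hfc hmem).trans (le_add_of_nonneg_left (H.f0_nonneg k _ (hx k)))
  · exact le_add_of_nonneg_right (sum_nonneg hfc)

theorem Qrhs_le (H : CompartmentalAt c f0 fc g Ienv L t) (hx : x ∈ boxIcc c) {a : ℝ} (ha : 0 ≤ a)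
    (hrate : a ≤ chainRate f0 fc t x k) :
    Qrhs f0 fc g Ienv t x k ≤ (n * fluxLipschitz c L + L) * (c k - x k) - a * x k := by
  have hgap : 0 ≤ c k - x k := sub_nonneg.2 (hx k).2
  have hcoupling : ∑ j ∈ univ.erase k, fc k j t (x k) * g j t (x j) ≤
      n * (fluxLipschitz c L * (c k - x k)) := by
    refine sum_le_mul_of_forall_le (mul_nonneg (fluxLipschitz_nonneg c L) hgap) fun j hj => ?_
    calc fc k j t (x k) * g j t (x j) ≤ (L * (c k - x k)) * (L * ‖c‖) :=
          mul_le_mul (H.fc_le (ne_of_mem_erase hj) (hx k)) (H.g_le (hx j)) (H.g_nonneg (hx j))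
            (by positivity)
      _ = fluxLipschitz c L * (c k - x k) := by unfold fluxLipschitz; ring
  have hout : a * x k ≤ (f0 k t (x k) + ∑ j ∈ univ.erase k, fc j k t (x j)) * g k t (x k) := by
    have hrate' := hrate.trans (H.chainRate_le_total_outflow hx k)
    exact mul_le_mul hrate' (H.le_g (hx k)) (hx k).1 (ha.trans hrate')
  have hinflow := H.inflow_le (hx k)
  unfold Qrhs
  linarith

end CompartmentalAt

theorem weighted_mul_sub_mul_le {wi wj si sj a a' b b' : ℝ} (hwi : 0 ≤ wi) (hwj : 0 ≤ wj)
    (ha : 0 ≤ a) (hb' : 0 ≤ b') (hsi : IsAbsSubgradient_s16 si (a' - a))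
    (hsj : IsAbsSubgradient_s16 sj (b - b')) :
    (wi * si - wj * sj) * (a * b - a' * b') ≤
      (wi - wj) * (a * |b - b'|) + (wj - wi) * (|a - a'| * b') := by
  have hi : wi * a * (si * (b - b')) ≤ wi * a * |b - b'| :=
    mul_le_mul_of_nonneg_left (hsi.mul_le_abs _) (mul_nonneg hwi ha)
  have hj : wj * b' * (sj * (a' - a)) ≤ wj * b' * |a' - a| :=
    mul_le_mul_of_nonneg_left (hsj.mul_le_abs _) (mul_nonneg hwj hb')
  calc (wi * si - wj * sj) * (a * b - a' * b')
      = wi * a * (si * (b - b')) - wj * a * (sj * (b - b')) - wi * b' * (si * (a' - a))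
          + wj * b' * (sj * (a' - a)) := by ring
    _ ≤ wi * a * |b - b'| - wj * a * |b - b'| - wi * b' * |a' - a| + wj * b' * |a' - a| := by
      rw [hsi.mul_eq_abs, hsj.mul_eq_abs]
      linarith
    _ = (wi - wj) * (a * |b - b'|) + (wj - wi) * (|a - a'| * b') := by
      rw [abs_sub_comm a a']
      ring

theorem sum_mul_Qrhs (u x : Fin n → ℝ) :
    ∑ i, u i * Qrhs f0 fc g Ienv t x i =
      ∑ i, ∑ j, (u i - u j) * (fc i j t (x i) * g j t (x j)) +
        ∑ i, u i * environmentExchange f0 g Ienv t i (x i) := by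
  have hQ : ∀ i, u i * Qrhs f0 fc g Ienv t x i =
      ∑ j, u i * (fc i j t (x i) * g j t (x j)) - ∑ j, u i * (fc j i t (x j) * g i t (x i)) +
        u i * environmentExchange f0 g Ienv t i (x i) := by
    intro i
    simp only [Qrhs, environmentExchange, ← mul_sum, ← sum_mul, sum_erase_eq_sub (mem_univ i)]
    ring
  simp only [hQ, sum_add_distrib, sum_sub_distrib, sub_mul]
  rw [sum_comm (f := fun i j => u i * (fc j i t (x j) * g i t (x i)))]

theorem sum_mul_Qrhs_sub (u x y : Fin n → ℝ) :
    ∑ i, u i * (Qrhs f0 fc g Ienv t x i - Qrhs f0 fc g Ienv t y i) =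
      ∑ i, ∑ j, (u i - u j) *
          (fc i j t (x i) * g j t (x j) - fc i j t (y i) * g j t (y j)) +
        ∑ i, u i * (environmentExchange f0 g Ienv t i (x i) -
          environmentExchange f0 g Ienv t i (y i)) := by
  simp only [mul_sub _ (Qrhs f0 fc g Ienv t x _), sum_sub_distrib, sum_mul_Qrhs,
    mul_sub (u _ - u _), mul_sub (u _) (environmentExchange ..)]
  ring

namespace CompartmentalAt

theorem mul_environmentExchange_sub_le (H : CompartmentalAt c f0 fc g Ienv L t) (hx : x ∈ boxIcc c)
    (hy : y ∈ boxIcc c) {i : Fin n} {σ : ℝ} (hσ : IsAbsSubgradient_s16 σ (x i - y i)) :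
    σ * (environmentExchange f0 g Ienv t i (x i) -
      environmentExchange f0 g Ienv t i (y i)) ≤ -(f0 i t (x i) * |x i - y i|) := by
  have hI := (hσ.sub_of_antitoneOn (H.inflow_antitoneOn i) (hx i) (hy i)).mul_eq_abs
  have hf := (hσ.sub_of_monotoneOn (H.f0_monotoneOn i) (hx i) (hy i)).mul_eq_abs
  have hg := (hσ.sub_of_monotoneOn (H.g_monotoneOn i) (hx i) (hy i)).mul_eq_abs
  have hI_nonneg := abs_nonneg (Ienv i t (y i) - Ienv i t (x i))
  have hf_nonneg := mul_nonneg (abs_nonneg (f0 i t (x i) - f0 i t (y i))) (H.g_nonneg (hy i))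
  have hexpand := mul_le_mul_of_nonneg_left (H.abs_sub_le_abs_g_sub (hx i) (hy i))
    (H.f0_nonneg i _ (hx i))
  unfold environmentExchange
  calc _ = -(σ * (Ienv i t (y i) - Ienv i t (x i))) -
        f0 i t (x i) * (σ * (g i t (x i) - g i t (y i))) -
        σ * (f0 i t (x i) - f0 i t (y i)) * g i t (y i) := by ring
    _ ≤ -(f0 i t (x i) * |x i - y i|) := by
      rw [hI, hf, hg]
      linarith

theorem sum_weighted_fc_mul_abs_g_sub_le (H : CompartmentalAt c f0 fc g Ienv L t)
    (hx : x ∈ boxIcc c) (hy : y ∈ boxIcc c) (hw : Antitone w) (hwn : 0 ≤ w n) {j : Fin n}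
    (hκ : 0 ≤ κ) (hrate : κ ≤ chainRate f0 fc t x j) :
    ∑ i : Fin n, (w i - w j) * (fc i j t (x i) * |g j t (x j) - g j t (y j)|) -
        w j * (f0 j t (x j) * |x j - y j|) ≤
      (n * fluxLipschitz c L * (w 0 - w j) - κ * (w j - w (j + 1))) * |x j - y j| := by
  have hB : 0 ≤ (w 0 - w j) * (fluxLipschitz c L * |x j - y j|) :=
    mul_nonneg (sub_nonneg.2 (hw (Nat.zero_le _)))
      (mul_nonneg (fluxLipschitz_nonneg c L) (abs_nonneg _))
  have hterm : ∀ i : Fin n, (w i - w j) * (fc i j t (x i) * |g j t (x j) - g j t (y j)|) ≤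
      (w 0 - w j) * (fluxLipschitz c L * |x j - y j|) := by
    intro i
    obtain rfl | hij := eq_or_ne j i
    · simpa only [sub_self, zero_mul] using hB
    · exact mul_le_mul (sub_le_sub_right (hw (Nat.zero_le _)) _) (H.fc_mul_abs_g_sub_le hx hy hij)
        (mul_nonneg (H.fc_nonneg hij (hx i)) (abs_nonneg _)) (sub_nonneg.2 (hw (Nat.zero_le _)))
  have hdrop : 0 ≤ w j - w (j + 1) := sub_nonneg.2 (hw (Nat.le_succ _))
  have hw_nonneg : 0 ≤ w j := hwn.trans (hw j.isLt.le)
  unfold chainRate at hrate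
  split_ifs at hrate with hj
  · set p : Fin n := ⟨j + 1, hj⟩
    have hpj : j ≠ p := by simp [p, Fin.ext_iff]
    have hrest := sum_le_mul_of_forall_le (S := univ.erase p) hB fun i _ => hterm i
    have hnext : κ * |x j - y j| ≤ fc p j t (x p) * |g j t (x j) - g j t (y j)| :=
      mul_le_mul hrate (H.abs_sub_le_abs_g_sub (hx j) (hy j)) (abs_nonneg _)
        (H.fc_nonneg hpj (hx p))
    have hgain := mul_le_mul_of_nonneg_left hnext hdrop
    have hleak := mul_nonneg hw_nonneg
      (mul_nonneg (H.f0_nonneg j _ (hx j)) (abs_nonneg (x j - y j)))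
    rw [← add_sum_erase univ _ (mem_univ p)]
    have hwp : w p = w (j + 1) := rfl
    rw [hwp]
    linarith
  · have hsum := sum_le_mul_of_forall_le (S := univ) hB fun i _ => hterm i
    have hwj : w j - w (j + 1) ≤ w j := by
      have : (j : ℕ) + 1 = n := by omega
      rw [this]
      linarith
    have hgain := mul_le_mul hwj (mul_le_mul_of_nonneg_right hrate (abs_nonneg (x j - y j)))
      (mul_nonneg hκ (abs_nonneg _)) hw_nonneg
    linarith

theorem sum_weighted_abs_fc_sub_mul_g_le (H : CompartmentalAt c f0 fc g Ienv L t)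
    (hx : x ∈ boxIcc c) (hy : y ∈ boxIcc c) (hw : Antitone w) (i : Fin n) :
    ∑ j : Fin n, (w j - w i) * (|fc i j t (x i) - fc i j t (y i)| * g j t (y j)) ≤
      n * fluxLipschitz c L * (w 0 - w i) * |x i - y i| := by
  have hdrop : 0 ≤ w 0 - w i := sub_nonneg.2 (hw (Nat.zero_le _))
  have hB : 0 ≤ (w 0 - w i) * (fluxLipschitz c L * |x i - y i|) :=
    mul_nonneg hdrop (mul_nonneg (fluxLipschitz_nonneg c L) (abs_nonneg _))
  refine (sum_le_mul_of_forall_le hB fun j _ => ?_).trans_eq (by ring)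
  obtain rfl | hij := eq_or_ne j i
  · simpa only [sub_self, zero_mul] using hB
  · exact mul_le_mul (sub_le_sub_right (hw (Nat.zero_le _)) _) (H.abs_fc_sub_mul_g_le hx hy hij)
      (mul_nonneg (abs_nonneg _) (H.g_nonneg (hy j))) hdrop

theorem weighted_flux_sub_le (H : CompartmentalAt c f0 fc g Ienv L t) (hx : x ∈ boxIcc c)
    (hy : y ∈ boxIcc c) {v : Fin n → ℝ} (hv : ∀ i, 0 ≤ v i)
    (hs : ∀ i, IsAbsSubgradient_s16 (s i) (x i - y i)) (i j : Fin n) :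
    (v i * s i - v j * s j) * (fc i j t (x i) * g j t (x j) - fc i j t (y i) * g j t (y j)) ≤
      (v i - v j) * (fc i j t (x i) * |g j t (x j) - g j t (y j)|) +
        (v j - v i) * (|fc i j t (x i) - fc i j t (y i)| * g j t (y j)) := by
  obtain rfl | hij := eq_or_ne j i
  · simp only [sub_self, zero_mul, add_zero, le_refl]
  · exact weighted_mul_sub_mul_le (hv i) (hv j) (H.fc_nonneg hij (hx i)) (H.g_nonneg (hy j))
      ((hs i).sub_of_antitoneOn (H.fc_antitoneOn i j hij) (hx i) (hy i))
      ((hs j).sub_of_monotoneOn (H.g_monotoneOn j) (hx j) (hy j))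

theorem sum_mul_Qrhs_sub_le (H : CompartmentalAt c f0 fc g Ienv L t) (hx : x ∈ boxIcc c)
    (hy : y ∈ boxIcc c) (hw : Antitone w) (hwn : 0 ≤ w n)
    (hs : ∀ i, IsAbsSubgradient_s16 (s i) (x i - y i)) (hκ : 0 ≤ κ)
    (hrate : ∀ k, κ ≤ chainRate f0 fc t x k) :
    ∑ i : Fin n, w i * (s i * (Qrhs f0 fc g Ienv t x i - Qrhs f0 fc g Ienv t y i)) ≤
      ∑ k : Fin n, (2 * (n * fluxLipschitz c L) * (w 0 - w k) - κ * (w k - w (k + 1))) *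
        |x k - y k| := by
  have hw_nonneg : ∀ i : Fin n, 0 ≤ w i := fun i => hwn.trans (hw i.isLt.le)
  let α : Fin n → Fin n → ℝ := fun i j => fc i j t (x i) * |g j t (x j) - g j t (y j)|
  let β : Fin n → Fin n → ℝ := fun i j => |fc i j t (x i) - fc i j t (y i)| * g j t (y j)
  have henv := fun i => mul_le_mul_of_nonneg_left (H.mul_environmentExchange_sub_le hx hy (hs i))
    (hw_nonneg i)
  calc ∑ i : Fin n, w i * (s i * (Qrhs f0 fc g Ienv t x i - Qrhs f0 fc g Ienv t y i))
      = ∑ i : Fin n, ∑ j : Fin n, (w i * s i - w j * s j) *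
            (fc i j t (x i) * g j t (x j) - fc i j t (y i) * g j t (y j)) +
          ∑ i : Fin n, w i * (s i * (environmentExchange f0 g Ienv t i (x i) -
            environmentExchange f0 g Ienv t i (y i))) := by
        simpa only [mul_assoc] using sum_mul_Qrhs_sub (fun i : Fin n => w i * s i) x y
    _ ≤ ∑ i : Fin n, ∑ j : Fin n, ((w i - w j) * α i j + (w j - w i) * β i j) +
          ∑ i : Fin n, w i * -(f0 i t (x i) * |x i - y i|) :=
        add_le_add (sum_le_sum fun i _ => sum_le_sum fun j _ =>
          H.weighted_flux_sub_le hx hy hw_nonneg hs i j)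
          (sum_le_sum fun i _ => henv i)
    _ = ∑ k : Fin n, ((∑ i : Fin n, (w i - w k) * α i k - w k * (f0 k t (x k) * |x k - y k|)) +
          ∑ j : Fin n, (w j - w k) * β k j) := by
        simp only [sum_add_distrib, sum_sub_distrib, mul_neg, sum_neg_distrib]
        rw [sum_comm (f := fun i j : Fin n => (w i - w j) * α i j)]
        ring
    _ ≤ _ := sum_le_sum fun k _ => by
        linarith [H.sum_weighted_fc_mul_abs_g_sub_le hx hy hw hwn hκ (hrate k),
          H.sum_weighted_abs_fc_sub_mul_g_le hx hy hw k]

end CompartmentalAt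

/-- `q` solves (S) on `[0, ∞)` inside the box, with the one-sided derivative at time `0`. -/
def IsSolution (c : Fin n → ℝ) (f0 : Fin n → ℝ → ℝ → ℝ) (fc : Fin n → Fin n → ℝ → ℝ → ℝ)
    (g Ienv : Fin n → ℝ → ℝ → ℝ) (q : ℝ → Fin n → ℝ) : Prop :=
  ∀ t ≥ 0, q t ∈ boxIcc c ∧ HasDerivWithinAt q (Qrhs f0 fc g Ienv t (q t)) (Set.Ici 0) t

section Solutions

variable {q₁ q₂ : ℝ → Fin n → ℝ} {T : ℝ}

theorem weighted_sum_abs_sub_le_mul_exp {K : ℝ} (hT : 0 ≤ T)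
    (hS : ∀ t ≥ T, CompartmentalAt c f0 fc g Ienv L t) (hw : Antitone w) (hwn : 0 ≤ w n)
    (hκ : 0 ≤ κ)
    (hK : ∀ k < n, 2 * (n * fluxLipschitz c L) * (w 0 - w k) - κ * (w k - w (k + 1)) ≤ K * w k)
    (hq₁ : IsSolution c f0 fc g Ienv q₁) (hq₂ : IsSolution c f0 fc g Ienv q₂)
    (hrate : ∀ t ≥ T, ∀ k, κ ≤ chainRate f0 fc t (q₁ t) k) :
    ∀ t ≥ T, ∑ i : Fin n, w i * |q₁ t i - q₂ t i| ≤
      (∑ i : Fin n, w i * |q₁ T i - q₂ T i|) * Real.exp (K * (t - T)) := by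
  refine sum_mul_abs_le_mul_exp (q := fun t => q₁ t - q₂ t) (w := fun i : Fin n => w i)
    (q' := fun t => Qrhs f0 fc g Ienv t (q₁ t) - Qrhs f0 fc g Ienv t (q₂ t))
    (fun t ht => ?_) fun t ht s hs => ?_
  · exact ((hq₁ t (hT.trans ht)).2.sub (hq₂ t (hT.trans ht)).2).mono (Set.Ici_subset_Ici.2 hT)
  · calc _ ≤ ∑ k : Fin n, (2 * (n * fluxLipschitz c L) * (w 0 - w k) - κ * (w k - w (k + 1))) *
          |q₁ t k - q₂ t k| :=
        (hS t ht).sum_mul_Qrhs_sub_le (hq₁ t (hT.trans ht)).1 (hq₂ t (hT.trans ht)).1 hw hwn hs hκ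
          (hrate t ht)
      _ ≤ ∑ k : Fin n, K * w k * |q₁ t k - q₂ t k| := by
        gcongr with k
        exact hK k k.isLt
      _ = K * ∑ k : Fin n, w k * |q₁ t k - q₂ t k| := by simp only [mul_sum, mul_assoc]

theorem onenorm_sub_le_onenorm_sub (hS : ∀ t ≥ 0, CompartmentalAt c f0 fc g Ienv L t)
    (hq₁ : IsSolution c f0 fc g Ienv q₁) (hq₂ : IsSolution c f0 fc g Ienv q₂)
    (ht : 0 ≤ t) : onenorm (q₁ t - q₂ t) ≤ onenorm (q₁ 0 - q₂ 0) := by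
  simpa [onenorm] using weighted_sum_abs_sub_le_mul_exp (w := fun _ => 1) (κ := 0) (K := 0) le_rfl
    hS antitone_const zero_le_one le_rfl (by simp) hq₁ hq₂
    (fun t ht k => (hS t ht).chainRate_nonneg (hq₁ t ht).1 k) t ht

theorem exists_onenorm_sub_le_mul_exp (hS : ∀ t ≥ 0, CompartmentalAt c f0 fc g Ienv L t)
    (hκ : 0 < κ) :
    ∃ lam, 0 < lam ∧ ∃ γ, 1 ≤ γ ∧ ∀ q₁ q₂, IsSolution c f0 fc g Ienv q₁ →
      IsSolution c f0 fc g Ienv q₂ → ∀ T ≥ 0,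
        (∀ t ≥ T, ∀ k, κ ≤ chainRate f0 fc t (q₁ t) k) → ∀ t ≥ T,
          onenorm (q₁ t - q₂ t) ≤ γ * Real.exp (-lam * (t - T)) * onenorm (q₁ T - q₂ T) := by
  have hB : 0 ≤ 2 * (n * fluxLipschitz c L) := by
    have := fluxLipschitz_nonneg c L
    positivity
  obtain ⟨w, hw, hwn, lam, hlam, γ, hγ, hbounds⟩ := exists_weights hB hκ n
  refine ⟨lam, hlam, γ, hγ, fun q₁ q₂ hq₁ hq₂ T hT hrate t ht => ?_⟩
  calc onenorm (q₁ t - q₂ t) ≤ ∑ i : Fin n, w i * |q₁ t i - q₂ t i| :=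
        sum_le_sum fun i _ => le_mul_of_one_le_left (abs_nonneg _) (hbounds i i.isLt).1
    _ ≤ (∑ i : Fin n, w i * |q₁ T i - q₂ T i|) * Real.exp (-lam * (t - T)) :=
        weighted_sum_abs_sub_le_mul_exp hT (fun t ht => hS t (hT.trans ht)) hw hwn hκ.le
          (fun k hk => (hbounds k hk).2.2) hq₁ hq₂ hrate t ht
    _ ≤ (∑ i : Fin n, γ * |q₁ T i - q₂ T i|) * Real.exp (-lam * (t - T)) := by
        gcongr with i
        exact (hbounds i i.isLt).2.1
    _ = γ * Real.exp (-lam * (t - T)) * onenorm (q₁ T - q₂ T) := by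
        rw [← mul_sum, mul_right_comm]
        rfl

end Solutions

theorem exists_lt_capacity_forall_le {k : Fin n} (hck : 0 < c k)
    (hS : ∀ t ≥ 0, CompartmentalAt c f0 fc g Ienv L t) (hκ : 0 < κ) :
    ∃ U ∈ Set.Ico 0 (c k), ∀ q, IsSolution c f0 fc g Ienv q → ∀ T ≥ 0,
      (∀ t ≥ T, κ ≤ chainRate f0 fc t (q t) k) → ∀ t ≥ T + 1, q t k ≤ U := by
  have hb : 0 ≤ n * fluxLipschitz c L + L := by
    have := fluxLipschitz_nonneg c L
    positivity
  obtain ⟨U, hU, hle⟩ := exists_lt_forall_le_of_deriv_le hκ hb hck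
  refine ⟨U, hU, fun q hq T hT hrate => ?_⟩
  refine hle (fun t => q t k) (fun t => Qrhs f0 fc g Ienv t (q t) k) T (fun t ht => ?_)
    ((hq T hT).1 k).2 fun t ht => ?_
  · exact (hasDerivWithinAt_pi.1 (hq t (hT.trans ht)).2 k).mono (Set.Ici_subset_Ici.2 hT)
  · exact (hS t (hT.trans ht)).Qrhs_le (hq t (hT.trans ht)).1 hκ.le (hrate t ht)

-- Downward induction along the chain: a compartment that empties at a positive rate stays away
-- from its capacity, and so keeps the inflow from its predecessor open.
theorem exists_eventually_le_chainRate_at (hc : ∀ i, 0 < c i)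
    (hS : ∀ t ≥ 0, CompartmentalAt c f0 fc g Ienv L t) {a : ℝ} (ha : 0 < a)
    (hlast : ∀ k : Fin n, (k : ℕ) + 1 = n → ∀ t ≥ 0, ∀ u ∈ Set.Icc 0 (c k), a ≤ f0 k t u)
    (hnext : ∀ i : Fin n, 1 ≤ (i : ℕ) → ∀ u ∈ Set.Ico 0 (c i), ∃ κ > 0, ∀ t ≥ 0,
      κ ≤ fc i ⟨(i : ℕ) - 1, by omega⟩ t u) (k : Fin n) :
    ∃ κ > 0, ∀ᶠ t in atTop, ∀ q, IsSolution c f0 fc g Ienv q → κ ≤ chainRate f0 fc t (q t) k := by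
  induction k using WellFoundedGT.induction with
  | ind k ih =>
    by_cases hk : (k : ℕ) + 1 < n
    · set p : Fin n := ⟨k + 1, hk⟩
      have hkp : k < p := Nat.lt_succ_self _
      obtain ⟨κ, hκ, hrate⟩ := ih p hkp
      obtain ⟨T, hT⟩ := (hrate.and (eventually_ge_atTop 0)).exists_forall_of_atTop
      obtain ⟨U, hU, hle⟩ := exists_lt_capacity_forall_le (hc p) hS hκ
      obtain ⟨κ', hκ', hfc⟩ := hnext p (Nat.succ_pos _) U hU
      refine ⟨κ', hκ', (eventually_ge_atTop (T + 1)).mono fun t ht q hq => ?_⟩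
      have ht_nonneg : 0 ≤ t := (hT t (by linarith)).2
      have hqU : q t p ≤ U := hle q hq T (hT T le_rfl).2 (fun r hr => (hT r hr).1 q hq) t ht
      rw [chainRate, dif_pos hk]
      exact (hfc t ht_nonneg).trans ((hS t ht_nonneg).fc_antitoneOn p k hkp.ne
        ((hq t ht_nonneg).1 p) ⟨hU.1, hU.2.le⟩ hqU)
    · refine ⟨a, ha, (eventually_ge_atTop 0).mono fun t ht q hq => ?_⟩
      rw [chainRate, dif_neg hk]
      exact hlast k (by omega) t ht _ ((hq t ht).1 k)

theorem exists_eventually_le_chainRate (hc : ∀ i, 0 < c i)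
    (hS : ∀ t ≥ 0, CompartmentalAt c f0 fc g Ienv L t) {a : ℝ} (ha : 0 < a)
    (hlast : ∀ k : Fin n, (k : ℕ) + 1 = n → ∀ t ≥ 0, ∀ u ∈ Set.Icc 0 (c k), a ≤ f0 k t u)
    (hnext : ∀ i : Fin n, 1 ≤ (i : ℕ) → ∀ u ∈ Set.Ico 0 (c i), ∃ κ > 0, ∀ t ≥ 0,
      κ ≤ fc i ⟨(i : ℕ) - 1, by omega⟩ t u) :
    ∃ κ > 0, ∀ᶠ t in atTop, ∀ q, IsSolution c f0 fc g Ienv q →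
      ∀ k, κ ≤ chainRate f0 fc t (q t) k := by
  choose κ hκ hrate using exists_eventually_le_chainRate_at hc hS ha hlast hnext
  obtain ⟨ε, hε, hle⟩ : ∃ ε > 0, ∀ k, ε ≤ κ k :=
    (eventually_mem_nhdsWithin.and <| eventually_all.2 fun k =>
      mem_of_superset (Ioo_mem_nhdsGT (hκ k)) fun _ hε => hε.2.le).exists
  exact ⟨ε, hε, (eventually_all.2 hrate).mono fun t ht q hq k => (hle k).trans (ht k q hq)⟩

theorem eventually_lipschitzOnWith_of_A1fun {ci : ℝ} {h : ℝ → ℝ → ℝ} (hh : A1fun ci h) :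
    ∀ᶠ K : ℝ≥0 in atTop, ∀ t ≥ 0, LipschitzOnWith K (h t) (Set.Icc 0 ci) := by
  obtain ⟨M, hM⟩ := hh.2.2
  filter_upwards [eventually_ge_atTop M.toNNReal] with K hK t ht
  refine LipschitzOnWith.of_dist_le_mul fun a ha b hb => ?_
  rw [Real.dist_eq, Real.dist_eq]
  exact (hM t ht a ha b hb).trans <|
    mul_le_mul_of_nonneg_right (Real.toNNReal_le_iff_le_coe.1 hK) (abs_nonneg _)

theorem exists_compartmentalAt
    (hf0 : ∀ i, ∀ t ∈ Set.Ici 0, ∀ a ∈ Set.Icc 0 (c i), 0 ≤ f0 i t a) (hg : ∀ i, A1fun (c i) (g i))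
    (hI : ∀ i, A1fun (c i) (Ienv i)) (hfc : ∀ i j, j ≠ i → A1fun (c i) (fc i j))
    (hA2 : ∀ t ≥ (0 : ℝ), ∀ i, Ienv i t (c i) = 0 ∧ g i t 0 = 0 ∧ ∀ j, j ≠ i → fc i j t (c i) = 0)
    (hA3 : ∀ t ≥ (0 : ℝ), ∀ i, ∀ xi yi : ℝ, 0 ≤ xi → xi ≤ yi → yi ≤ c i →
      yi - xi ≤ g i t yi - g i t xi)
    (hA4 : ∀ t ≥ (0 : ℝ), ∀ i j, j ≠ i → AntitoneOn (fc i j t) (Set.Icc 0 (c i)))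
    (hA5 : ∀ t ≥ (0 : ℝ), ∀ i, MonotoneOn (f0 i t) (Set.Icc 0 (c i)))
    (hA6 : ∀ t ≥ (0 : ℝ), ∀ i, AntitoneOn (Ienv i t) (Set.Icc 0 (c i))) :
    ∃ L, ∀ t ≥ 0, CompartmentalAt c f0 fc g Ienv L t := by
  obtain ⟨L, hgL, hIL, hfcL⟩ := ((eventually_all.2 fun i =>
    eventually_lipschitzOnWith_of_A1fun (hg i)).and <| (eventually_all.2 fun i =>
    eventually_lipschitzOnWith_of_A1fun (hI i)).and <| eventually_all.2 fun i =>
    eventually_all.2 fun j => eventually_imp_distrib_left.2 fun hij =>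
    eventually_lipschitzOnWith_of_A1fun (hfc i j hij)).exists
  exact ⟨L, fun t ht =>
    { f0_nonneg := fun i => hf0 i t ht
      f0_monotoneOn := hA5 t ht
      fc_lipschitzOnWith := fun i j hij => hfcL i j hij t ht
      fc_antitoneOn := hA4 t ht
      fc_capacity := fun i => (hA2 t ht i).2.2
      g_lipschitzOnWith := fun i => hgL i t ht
      g_expanding := fun i a ha b hb hab => hA3 t ht i a b ha.1 hab hb.2
      g_zero := fun i => (hA2 t ht i).2.1
      inflow_lipschitzOnWith := fun i => hIL i t ht
      inflow_antitoneOn := hA6 t ht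
      inflow_capacity := fun i => (hA2 t ht i).1 }⟩

theorem stmt16_general (hc : ∀ i, 0 < c i) (hS : ∀ t ≥ 0, CompartmentalAt c f0 fc g Ienv L t)
    {a : ℝ} (ha : 0 < a)
    (hlast : ∀ k : Fin n, (k : ℕ) + 1 = n → ∀ t ≥ 0, ∀ u ∈ Set.Icc 0 (c k), a ≤ f0 k t u)
    (hnext : ∀ i : Fin n, 1 ≤ (i : ℕ) → ∀ u ∈ Set.Ico 0 (c i), ∃ κ > 0, ∀ t ≥ 0,
      κ ≤ fc i ⟨(i : ℕ) - 1, by omega⟩ t u) :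
    ∃ lam, 0 < lam ∧ ∃ γ, 1 ≤ γ ∧ ∀ q₁ q₂, IsSolution c f0 fc g Ienv q₁ →
      IsSolution c f0 fc g Ienv q₂ → ∀ t ≥ 0,
        onenorm (q₁ t - q₂ t) ≤ γ * Real.exp (-lam * t) * onenorm (q₁ 0 - q₂ 0) := by
  obtain ⟨κ, hκ, hrate⟩ := exists_eventually_le_chainRate hc hS ha hlast hnext
  obtain ⟨T, hT⟩ := (hrate.and (eventually_ge_atTop 0)).exists_forall_of_atTop
  have hT_nonneg : 0 ≤ T := (hT T le_rfl).2
  obtain ⟨lam, hlam, γ, hγ, hcontract⟩ := exists_onenorm_sub_le_mul_exp hS hκ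
  refine ⟨lam, hlam, γ * Real.exp (lam * T),
    one_le_mul_of_one_le_of_one_le hγ (Real.one_le_exp (by positivity)),
    fun q₁ q₂ hq₁ hq₂ t ht => ?_⟩
  have hnorm : 0 ≤ onenorm (q₁ 0 - q₂ 0) := sum_nonneg fun i _ => abs_nonneg _
  have hfactor : γ * Real.exp (lam * T) * Real.exp (-lam * t) =
      γ * Real.exp (-lam * (t - T)) := by
    rw [mul_assoc, ← Real.exp_add]
    ring_nf
  rw [hfactor]
  rcases le_total T t with hTt | htT
  · calc onenorm (q₁ t - q₂ t) ≤ γ * Real.exp (-lam * (t - T)) * onenorm (q₁ T - q₂ T) :=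
          hcontract q₁ q₂ hq₁ hq₂ T hT_nonneg (fun r hr => (hT r hr).1 q₁ hq₁) t hTt
      _ ≤ γ * Real.exp (-lam * (t - T)) * onenorm (q₁ 0 - q₂ 0) := by
          gcongr
          exact onenorm_sub_le_onenorm_sub hS hq₁ hq₂ hT_nonneg
  · have hone_le : 1 ≤ γ * Real.exp (-lam * (t - T)) :=
      one_le_mul_of_one_le_of_one_le hγ (Real.one_le_exp (by nlinarith))
    exact (onenorm_sub_le_onenorm_sub hS hq₁ hq₂ ht).trans (le_mul_of_one_le_left hnorm hone_le)

end

/-- under (A1)–(A7), if `f_{0n}(t,·) ≥ aₙ > 0` on `[0,cₙ]` and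
for each `i = 2,…,n` (`0`-based: `1 ≤ i`) there is a nonincreasing
`h_i : [0,c_i] → ℝ` with `f_{i,i−1}(t,x_i) ≥ h_i(x_i) > 0` on `[0,c_i)`, then
the system (S) is incrementally exponentially stable with respect to `𝒳`. -/
theorem stmt16 (n : ℕ) (hn : 0 < n) (c : Fin n → ℝ) (hc : ∀ i, 0 < c i)
    (f0 : Fin n → ℝ → ℝ → ℝ) (fc : Fin n → Fin n → ℝ → ℝ → ℝ)
    (g Ienv : Fin n → ℝ → ℝ → ℝ)
    (hA1 : (∀ i, A1fun (c i) (f0 i)) ∧ (∀ i, A1fun (c i) (g i)) ∧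
      (∀ i, A1fun (c i) (Ienv i)) ∧ ∀ i j, j ≠ i → A1fun (c i) (fc i j))
    (hA2 : ∀ t ≥ (0 : ℝ), ∀ i, Ienv i t 0 = 0 ∧ Ienv i t (c i) = 0 ∧
      g i t 0 = 0 ∧ ∀ j, j ≠ i → fc i j t (c i) = 0)
    (hA3 : ∀ t ≥ (0 : ℝ), ∀ i, ∀ xi yi : ℝ, 0 ≤ xi → xi ≤ yi → yi ≤ c i →
      yi - xi ≤ g i t yi - g i t xi)
    (hA4 : ∀ t ≥ (0 : ℝ), ∀ i j, j ≠ i → AntitoneOn (fc i j t) (Set.Icc 0 (c i)))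
    (hA5 : ∀ t ≥ (0 : ℝ), ∀ i, MonotoneOn (f0 i t) (Set.Icc 0 (c i)))
    (hA6 : ∀ t ≥ (0 : ℝ), ∀ i, AntitoneOn (Ienv i t) (Set.Icc 0 (c i)))
    -- (A7): existence and uniqueness of solutions in `𝒳` from any initial data
    (hA7 : ∀ τ ≥ (0 : ℝ), ∀ ξ ∈ boxIcc c, ∃ q : ℝ → Fin n → ℝ,
      (q τ = ξ ∧ ∀ t ≥ τ, q t ∈ boxIcc c ∧
        HasDerivAt q (Qrhs f0 fc g Ienv t (q t)) t) ∧
      ∀ q' : ℝ → Fin n → ℝ,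
        (q' τ = ξ ∧ ∀ t ≥ τ, q' t ∈ boxIcc c ∧
          HasDerivAt q' (Qrhs f0 fc g Ienv t (q' t)) t) →
        ∀ t ≥ τ, q' t = q t)
    -- the flow from time `0`
    (φ : ℝ → (Fin n → ℝ) → (Fin n → ℝ))
    (hφ : ∀ ξ ∈ boxIcc c, φ 0 ξ = ξ ∧ ∀ t ≥ (0 : ℝ), φ t ξ ∈ boxIcc c ∧
      HasDerivAt (fun s => φ s ξ) (Qrhs f0 fc g Ienv t (φ t ξ)) t)
    -- the extra assumptions of Proposition `IES2`
    (an : ℝ) (han : 0 < an)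
    (hf0n : ∀ t ≥ (0 : ℝ), ∀ s ∈ Set.Icc 0 (c ⟨n - 1, by omega⟩),
      an ≤ f0 ⟨n - 1, by omega⟩ t s)
    (h : Fin n → ℝ → ℝ)
    (hhmono : ∀ i : Fin n, 1 ≤ (i : ℕ) → AntitoneOn (h i) (Set.Icc 0 (c i)))
    (hfii : ∀ i : Fin n, 1 ≤ (i : ℕ) → ∀ t ≥ (0 : ℝ), ∀ s ∈ Set.Ico 0 (c i),
      h i s ≤ fc i ⟨(i : ℕ) - 1, Nat.lt_of_le_of_lt (Nat.sub_le _ _) i.isLt⟩ t s ∧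
      0 < h i s) :
    ∃ lam : ℝ, 0 < lam ∧ ∃ γ : ℝ, 1 ≤ γ ∧
      ∀ ξ₁ ∈ boxIcc c, ∀ ξ₂ ∈ boxIcc c, ∀ t ≥ (0 : ℝ),
        onenorm (φ t ξ₁ - φ t ξ₂) ≤ γ * Real.exp (-lam * t) * onenorm (ξ₁ - ξ₂) := by
  obtain ⟨L, hS⟩ := exists_compartmentalAt (fun i => (hA1.1 i).2.1) hA1.2.1 hA1.2.2.1 hA1.2.2.2
    (fun t ht i => (hA2 t ht i).2) hA3 hA4 hA5 hA6
  have hlast : ∀ k : Fin n, (k : ℕ) + 1 = n → ∀ t ≥ 0, ∀ u ∈ Set.Icc 0 (c k), an ≤ f0 k t u := by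
    intro k hk
    rwa [show k = ⟨n - 1, by omega⟩ from Fin.ext (Nat.eq_sub_of_add_eq hk)]
  obtain ⟨lam, hlam, γ, hγ, hstable⟩ := stmt16_general hc hS han hlast fun i hi u hu =>
    ⟨h i u, (hfii i hi 0 le_rfl u hu).2, fun t ht => (hfii i hi t ht u hu).1⟩
  have hsol : ∀ ξ ∈ boxIcc c, IsSolution c f0 fc g Ienv (fun t => φ t ξ) :=
    fun ξ hξ t ht => ⟨((hφ ξ hξ).2 t ht).1, ((hφ ξ hξ).2 t ht).2.hasDerivWithinAt⟩
  exact ⟨lam, hlam, γ, hγ, fun ξ₁ hξ₁ ξ₂ hξ₂ => by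
    simpa only [(hφ ξ₁ hξ₁).1, (hφ ξ₂ hξ₂).1] using hstable _ _ (hsol ξ₁ hξ₁) (hsol ξ₂ hξ₂)⟩
end

section
/- Fix c ∈ (0,∞)ⁿ and the box 𝒳 = [0,c₁] × ⋯ × [0,cₙ]. Let f : [0,∞) × 𝒳 → ℝⁿ be continuous, Lipschitz continuous in its second argument uniformly in the first on compact sets, and such that x ↦ f(t,x) is type K on 𝒳 for each t ≥ 0. Suppose there is a map φ : [0,∞) × 𝒳 → 𝒳 such that for every ξ ∈ 𝒳, φ(0,ξ) = ξ and t ↦ φ(t,ξ) is differentiable with ∂_t φ(t,ξ) = f(t, φ(t,ξ)) for all t ≥ 0. Let L₂,…,Lₙ ≥ 0 and aₙ > 0 be constants and, for i = 2,…,n, let h_i : ℝ → ℝ be nonincreasing functions with h_i(z) > 0 for all z ∈ [0,c_i). Assume that for all t ≥ 0 and z ∈ 𝒳: f_i(t,z) ≤ L_i (c_i − z_i) − z_i h_{i+1}(z_{i+1}) for i = 2,…,n−1, and fₙ(t,z) ≤ Lₙ (cₙ − zₙ) − zₙ aₙ. Then for every τ > 0 there exist s₂ ∈ [0,c₂),…,sₙ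 ∈ [0,cₙ) such that φ_i(t,ξ) ≤ s_i for all t ≥ τ, all ξ ∈ 𝒳, and all i = 2,…,n. -/
open Finset

/-- A map `h` is type K on `D ⊆ ℝⁿ` if `h_i a ≤ h_i b` whenever `a, b ∈ D`
satisfy `a ≤ b` componentwise and `a_i = b_i`. -/
def IsTypeKOn {n : ℕ} (h : (Fin n → ℝ) → (Fin n → ℝ)) (D : Set (Fin n → ℝ)) : Prop :=
  ∀ a ∈ D, ∀ b ∈ D, a ≤ b → ∀ i, a i = b i → h a i ≤ h b i

/-!
The differential inequality `u' ≤ L (c - u) - u a` is linear in `u`, so Grönwall's inequality bounds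
every trajectory starting at or below `c` by one explicit curve issuing from `c`. As `a > 0`, that
curve is strictly decreasing, so after any positive time all trajectories lie below a common level
smaller than `c`. The last coordinate obeys such an inequality outright. Once coordinate `i + 1`
stays below `s < c_{i+1}`, monotonicity of `h_{i+1}` gives coordinate `i` such an inequality with
`a = h_{i+1}(s) > 0`, so the bounds propagate from the last coordinate downwards; each step
uses half of the available time.
-/

theorem mul_gronwallBound_add (δ K ε x : ℝ) :
    K * gronwallBound δ K ε x + ε = (K * δ + ε) * Real.exp (K * x) := by
  by_cases hK : K = 0
  · simp [hK]
  · rw [gronwallBound_of_K_ne_0 hK]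
    field_simp
    ring

theorem strictAnti_gronwallBound {δ K ε : ℝ} (h : K * δ + ε < 0) :
    StrictAnti (gronwallBound δ K ε) :=
  strictAnti_of_deriv_neg fun x => by
    rw [(hasDerivAt_gronwallBound δ K ε x).deriv, mul_gronwallBound_add]
    exact mul_neg_of_neg_of_pos h (Real.exp_pos _)

theorem le_gronwallBound_of_deriv_right_le {u u' : ℝ → ℝ} {δ K ε a b : ℝ}
    (hu : ContinuousOn u (Set.Icc a b))
    (hu' : ∀ t ∈ Set.Ico a b, HasDerivWithinAt u (u' t) (Set.Ici t) t)
    (ha : u a ≤ δ) (bound : ∀ t ∈ Set.Ico a b, u' t ≤ K * u t + ε) :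
    ∀ t ∈ Set.Icc a b, u t ≤ gronwallBound δ K ε (t - a) :=
  le_gronwallBound_of_liminf_deriv_right_le hu
    (fun t ht _ hr => by simpa only [slope_def_field, div_eq_inv_mul] using
      (hu' t ht).liminf_right_slope_le hr) ha bound

theorem exists_mem_Ico_forall_le_of_deriv_le (L : ℝ) {a c δ : ℝ} (ha : 0 < a) (hc : 0 < c)
    (hδ : 0 < δ) :
    ∃ s ∈ Set.Ico 0 c, ∀ (t₀ : ℝ) (u u' : ℝ → ℝ),
      (∀ t ≥ t₀, HasDerivWithinAt u (u' t) (Set.Ici t₀) t) →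
      (∀ t ≥ t₀, u' t ≤ L * (c - u t) - u t * a) → u t₀ ≤ c → ∀ t ≥ t₀ + δ, u t ≤ s := by
  set g := gronwallBound c (-(L + a)) (L * c)
  have hanti : StrictAnti g := strictAnti_gronwallBound (by linarith [mul_pos ha hc])
  have hgδ : g δ < c := (hanti hδ).trans_eq (gronwallBound_x0 _ _ _)
  refine ⟨max 0 (g δ), ⟨le_max_left _ _, max_lt hc hgδ⟩, fun t₀ u u' hu hbound hu₀ t ht => ?_⟩
  have hu_le : u t ≤ g (t - t₀) :=
    le_gronwallBound_of_deriv_right_le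
      (fun x hx => ((hu x hx.1).continuousWithinAt).mono Set.Icc_subset_Ici_self)
      (fun x hx => (hu x hx.1).mono (Set.Ici_subset_Ici.2 hx.1)) hu₀
      (fun x hx => (hbound x hx.1).trans_eq (by ring)) t ⟨by linarith, le_rfl⟩
  calc u t ≤ g (t - t₀) := hu_le
    _ ≤ g δ := hanti.antitone (by linarith)
    _ ≤ max 0 (g δ) := le_max_right _ _

/-- A solution on `[0, ∞)` of `x' = f(t, x)` that stays in the box `∏ [0, c_i]`; the derivative at
time `0` is one-sided. -/
structure IsBoxSolution {n : ℕ} (f : ℝ → (Fin n → ℝ) → (Fin n → ℝ)) (c : Fin n → ℝ)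
    (x : ℝ → Fin n → ℝ) : Prop where
  mem_boxIcc : ∀ t ≥ (0 : ℝ), x t ∈ boxIcc c
  hasDerivWithinAt : ∀ t ≥ (0 : ℝ), HasDerivWithinAt x (f t (x t)) (Set.Ici 0) t

/-- The face `x_i = c_i` of the box uniformly repels the solutions of `x' = f(t, x)`: after any
positive time, the `i`-th coordinates of all solutions in the box lie below a common level
`s < c_i`. -/
def IsUniformlyRepellingFace {n : ℕ} (f : ℝ → (Fin n → ℝ) → (Fin n → ℝ)) (c : Fin n → ℝ)
    (i : Fin n) : Prop :=
  ∀ τ > (0 : ℝ), ∃ s ∈ Set.Ico 0 (c i), ∀ x, IsBoxSolution f c x → ∀ t ≥ τ, x t i ≤ s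

namespace IsUniformlyRepellingFace

variable {n : ℕ} {f : ℝ → (Fin n → ℝ) → (Fin n → ℝ)} {c : Fin n → ℝ} {i j : Fin n} {L : ℝ}

theorem of_eventual_rate (hc : 0 < c i)
    (hrate : ∀ τ > (0 : ℝ), ∃ a > 0, ∀ x, IsBoxSolution f c x → ∀ t ≥ τ,
      f t (x t) i ≤ L * (c i - x t i) - x t i * a) :
    IsUniformlyRepellingFace f c i := by
  intro τ hτ
  obtain ⟨a, ha, hbound⟩ := hrate (τ / 2) (half_pos hτ)
  obtain ⟨s, hs, hle⟩ := exists_mem_Ico_forall_le_of_deriv_le L ha hc (half_pos hτ)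
  refine ⟨s, hs, fun x hx t ht => ?_⟩
  have hderiv : ∀ t ≥ τ / 2,
      HasDerivWithinAt (fun r => x r i) (f t (x t) i) (Set.Ici (τ / 2)) t := fun t ht =>
    (hasDerivWithinAt_pi.1 (hx.hasDerivWithinAt t (by linarith)) i).mono
      (Set.Ici_subset_Ici.2 (half_pos hτ).le)
  exact hle (τ / 2) _ _ hderiv (hbound x hx) (hx.mem_boxIcc _ (half_pos hτ).le i).2 t (by linarith)

theorem of_antitone_rate (hj : IsUniformlyRepellingFace f c j) (hc : 0 < c i)
    {h : ℝ → ℝ} (hanti : AntitoneOn h (Set.Icc 0 (c j))) (hpos : ∀ z ∈ Set.Ico 0 (c j), 0 < h z)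
    (hf : ∀ t ≥ (0 : ℝ), ∀ z ∈ boxIcc c, f t z i ≤ L * (c i - z i) - z i * h (z j)) :
    IsUniformlyRepellingFace f c i := by
  refine of_eventual_rate (L := L) hc fun τ hτ => ?_
  obtain ⟨s, hs, hle⟩ := hj τ hτ
  refine ⟨h s, hpos s hs, fun x hx t ht => ?_⟩
  have hbox : x t ∈ boxIcc c := hx.mem_boxIcc t (hτ.le.trans ht)
  have hrate : h s ≤ h (x t j) := hanti (hbox j) (Set.Ico_subset_Icc_self hs) (hle x hx t ht)
  calc f t (x t) i ≤ L * (c i - x t i) - x t i * h (x t j) := hf t (hτ.le.trans ht) _ hbox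
    _ ≤ L * (c i - x t i) - x t i * h s :=
      sub_le_sub_left (mul_le_mul_of_nonneg_left hrate (hbox i).1) _

end IsUniformlyRepellingFace

theorem stmt17_general (n : ℕ) (c : Fin n → ℝ) (hc : ∀ i, 0 < c i)
    (f : ℝ → (Fin n → ℝ) → (Fin n → ℝ)) (L : Fin n → ℝ) (an : ℝ) (han : 0 < an)
    (h : Fin n → ℝ → ℝ)
    (hhmono : ∀ i : Fin n, 1 ≤ (i : ℕ) → AntitoneOn (h i) (Set.Icc 0 (c i)))
    (hhpos : ∀ i : Fin n, 1 ≤ (i : ℕ) → ∀ z ∈ Set.Ico 0 (c i), 0 < h i z)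
    (hmid : ∀ t ≥ (0 : ℝ), ∀ z ∈ boxIcc c, ∀ i : Fin n, 1 ≤ (i : ℕ) →
      (hi : (i : ℕ) + 1 < n) →
      f t z i ≤ L i * (c i - z i) - z i * h ⟨(i : ℕ) + 1, hi⟩ (z ⟨(i : ℕ) + 1, hi⟩))
    (hlast : ∀ t ≥ (0 : ℝ), ∀ z ∈ boxIcc c, ∀ i : Fin n, 1 ≤ (i : ℕ) → (i : ℕ) + 1 = n →
      f t z i ≤ L i * (c i - z i) - z i * an) :
    ∀ τ > (0 : ℝ), ∃ s : Fin n → ℝ,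
      (∀ i : Fin n, 1 ≤ (i : ℕ) → s i ∈ Set.Ico 0 (c i)) ∧
      ∀ x, IsBoxSolution f c x → ∀ t ≥ τ, ∀ i : Fin n, 1 ≤ (i : ℕ) → x t i ≤ s i := by
  have hface (i : Fin n) (hi : 1 ≤ (i : ℕ)) : IsUniformlyRepellingFace f c i := by
    induction i using WellFoundedGT.induction with
    | ind i ih =>
      by_cases hin : (i : ℕ) + 1 < n
      · exact (ih ⟨i + 1, hin⟩ (Nat.lt_succ_self _) (Nat.le_add_left _ _)).of_antitone_rate
          (hc i) (hhmono _ (Nat.le_add_left _ _)) (hhpos _ (Nat.le_add_left _ _))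
          fun t ht z hz => hmid t ht z hz i hi hin
      · exact .of_eventual_rate (hc i) fun τ hτ => ⟨an, han, fun x hx t ht =>
          hlast t (hτ.le.trans ht) _ (hx.mem_boxIcc t (hτ.le.trans ht)) i hi (by omega)⟩
  intro τ hτ
  choose! s hs hle using fun i hi => hface i hi τ hτ
  exact ⟨s, hs, fun x hx t ht i hi => hle i hi x hx t ht⟩

/-- for a system cooperative in the box `𝒳 = ∏ [0,c_i]` whose
components `i = 2,…,n` (`0`-based: `1 ≤ i`) satisfy the one-sided bounds
`f_i(t,z) ≤ L_i (c_i − z_i) − z_i h_{i+1}(z_{i+1})` (for `i = 2,…,n−1`) and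
`f_n(t,z) ≤ L_n (c_n − z_n) − z_n a_n`, for every `τ > 0` there are
`s_i ∈ [0, c_i)` such that `φ_i(t,ξ) ≤ s_i` for all `t ≥ τ`, `ξ ∈ 𝒳` and
`i = 2,…,n`. -/
theorem stmt17 (n : ℕ) (hn : 0 < n) (c : Fin n → ℝ) (hc : ∀ i, 0 < c i)
    (f : ℝ → (Fin n → ℝ) → (Fin n → ℝ))
    (hcont : ContinuousOn (fun p : ℝ × (Fin n → ℝ) => f p.1 p.2)
      (Set.Ici 0 ×ˢ boxIcc c))
    (hlip : ∀ K ⊆ boxIcc c, IsCompact K → ∃ L : ℝ, ∀ t ≥ (0 : ℝ), ∀ x ∈ K, ∀ y ∈ K,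
      ‖f t x - f t y‖ ≤ L * ‖x - y‖)
    (hK : ∀ t ≥ (0 : ℝ), IsTypeKOn (f t) (boxIcc c))
    (φ : ℝ → (Fin n → ℝ) → (Fin n → ℝ))
    (hφ : ∀ ξ ∈ boxIcc c, φ 0 ξ = ξ ∧ ∀ t ≥ (0 : ℝ), φ t ξ ∈ boxIcc c ∧
      HasDerivAt (fun s => φ s ξ) (f t (φ t ξ)) t)
    (L : Fin n → ℝ) (hL : ∀ i : Fin n, 1 ≤ (i : ℕ) → 0 ≤ L i)
    (an : ℝ) (han : 0 < an)
    (h : Fin n → ℝ → ℝ)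
    (hhmono : ∀ i : Fin n, 1 ≤ (i : ℕ) → Antitone (h i))
    (hhpos : ∀ i : Fin n, 1 ≤ (i : ℕ) → ∀ z ∈ Set.Ico 0 (c i), 0 < h i z)
    (hmid : ∀ t ≥ (0 : ℝ), ∀ z ∈ boxIcc c, ∀ i : Fin n, 1 ≤ (i : ℕ) →
      (hi : (i : ℕ) + 1 < n) →
      f t z i ≤ L i * (c i - z i) - z i * h ⟨(i : ℕ) + 1, hi⟩ (z ⟨(i : ℕ) + 1, hi⟩))
    (hlast : ∀ t ≥ (0 : ℝ), ∀ z ∈ boxIcc c,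
      f t z ⟨n - 1, by omega⟩ ≤
        L ⟨n - 1, by omega⟩ * (c ⟨n - 1, by omega⟩ - z ⟨n - 1, by omega⟩)
          - z ⟨n - 1, by omega⟩ * an) :
    ∀ τ > (0 : ℝ), ∃ s : Fin n → ℝ,
      (∀ i : Fin n, 1 ≤ (i : ℕ) → s i ∈ Set.Ico 0 (c i)) ∧
      ∀ t ≥ τ, ∀ ξ ∈ boxIcc c, ∀ i : Fin n, 1 ≤ (i : ℕ) → φ t ξ i ≤ s i := by
  have eq_last (i : Fin n) (hi : (i : ℕ) + 1 = n) : i = ⟨n - 1, Nat.sub_one_lt hn.ne'⟩ :=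
    Fin.ext (Nat.eq_sub_of_add_eq hi)
  intro τ hτ
  obtain ⟨s, hs, hle⟩ := stmt17_general n c hc f L an han h
    (fun i hi => (hhmono i hi).antitoneOn _) hhpos hmid
    (fun t ht z hz i _ hi => eq_last i hi ▸ hlast t ht z hz) τ hτ
  exact ⟨s, hs, fun t ht ξ hξ => hle (fun r => φ r ξ) ⟨fun r hr => ((hφ ξ hξ).2 r hr).1,
    fun r hr => ((hφ ξ hξ).2 r hr).2.hasDerivWithinAt⟩ t ht⟩
end

section
/- Let 𝒳 ⊆ [0,∞)^n, let F : [0,∞) × 𝒳 → ℝ^{n×n} and g : [0,∞) × 𝒳 → ℝⁿ with g(t,x) ≥ x componentwise for all t ≥ 0 and x ∈ 𝒳. Fix 1 < l ≤ n, a ∈ (0,∞)^l and b ≥ 0, and suppose F(t,x) ∈ ℱ(a,b,l) for all t ≥ 0 and x ∈ 𝒳. Then there exist constants λ > 0 and γ ≥ 1, depending only on n, l, a and b, such that every differentiable q : [0,∞) → 𝒳 satisfying q̇(t) = F(t,q(t)) g(t,q(t)) for all t ≥ 0 obeys |q(t)|₁ ≤ γ e^{−λ t} |q(0)|₁ for all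 t ≥ 0; i.e. the null solution is exponentially stable with respect to 𝒳. -/
open Finset

/-!
Count the environment as one more compartment behind the last one. A matrix of `ℱ(a, b, l)` then
sends the content of every compartment downstream at rate at least `α = min a`, while each
individual upstream rate is at most `b`. Give compartment `k` the weight `M ^ n - M ^ k`, so that
the environment has weight `0`. If `M` is so large that one step downstream outweighs all possible
steps upstream, namely `(M - 1) α = n b + 1`, then the weighted content is a linear Lyapunov
function, and Grönwall's inequality gives the exponential decay.
-/

open Matrix

theorem le_mul_exp_of_right_deriv_le_mul {f f' : ℝ → ℝ} {K t₀ : ℝ}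
    (hf : ContinuousOn f (Set.Ici t₀))
    (hf' : ∀ t ≥ t₀, HasDerivWithinAt f (f' t) (Set.Ici t) t)
    (hle : ∀ t ≥ t₀, f' t ≤ K * f t) {t : ℝ} (ht : t₀ ≤ t) :
    f t ≤ f t₀ * Real.exp (K * (t - t₀)) := by
  rw [← gronwallBound_ε0]
  exact le_gronwallBound_of_liminf_deriv_right_le (hf.mono Set.Icc_subset_Ici_self)
    (fun s hs _ hr => (hf' s hs.1).liminf_right_slope_le hr) le_rfl
    (fun s hs => by simpa only [add_zero] using hle s hs.1) t ⟨ht, le_rfl⟩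

section LinearLyapunov

variable {n : ℕ} {w x : Fin n → ℝ} {c C : ℝ}

theorem onenorm_eq_sum (hx : 0 ≤ x) : onenorm x = ∑ i, x i :=
  sum_congr rfl fun i _ => abs_of_nonneg (hx i)

theorem mul_onenorm_le_dotProduct (hx : 0 ≤ x) (hw : ∀ i, c ≤ w i) :
    c * onenorm x ≤ w ⬝ᵥ x := by
  rw [onenorm_eq_sum hx, mul_sum]
  exact sum_le_sum fun i _ => mul_le_mul_of_nonneg_right (hw i) (hx i)

theorem dotProduct_le_mul_onenorm (hx : 0 ≤ x) (hw : ∀ i, w i ≤ C) :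
    w ⬝ᵥ x ≤ C * onenorm x := by
  rw [onenorm_eq_sum hx, mul_sum]
  exact sum_le_sum fun i _ => mul_le_mul_of_nonneg_right (hw i) (hx i)

theorem dotProduct_mulVec_le_neg_onenorm {m : ℕ} {v : Fin m → ℝ} {A : Matrix (Fin m) (Fin n) ℝ}
    {y : Fin n → ℝ} (hA : v ᵥ* A ≤ -1) (hx : 0 ≤ x) (hxy : x ≤ y) :
    v ⬝ᵥ A *ᵥ y ≤ -onenorm x :=
  calc v ⬝ᵥ A *ᵥ y = v ᵥ* A ⬝ᵥ y := dotProduct_mulVec v A y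
    _ ≤ -1 ⬝ᵥ y := dotProduct_le_dotProduct_of_nonneg_right hA (hx.trans hxy)
    _ = -∑ i, y i := by rw [neg_dotProduct, one_dotProduct]
    _ ≤ -∑ i, x i := neg_le_neg (sum_le_sum fun i _ => hxy i)
    _ = -onenorm x := by rw [onenorm_eq_sum hx]

theorem onenorm_le_of_dotProduct_right_deriv_le {q q' : ℝ → Fin n → ℝ} {t₀ : ℝ} (hc : 0 < c)
    (hC : 0 < C) (hcw : ∀ i, c ≤ w i) (hwC : ∀ i, w i ≤ C) (hq₀ : ∀ t ≥ t₀, 0 ≤ q t)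
    (hq : ContinuousOn q (Set.Ici t₀))
    (hq' : ∀ t ≥ t₀, HasDerivWithinAt q (q' t) (Set.Ici t) t)
    (hdecay : ∀ t ≥ t₀, w ⬝ᵥ q' t ≤ -onenorm (q t)) {t : ℝ} (ht : t₀ ≤ t) :
    onenorm (q t) ≤ C / c * Real.exp (-C⁻¹ * (t - t₀)) * onenorm (q t₀) := by
  have hV : ContinuousOn (fun s => w ⬝ᵥ q s) (Set.Ici t₀) :=
    continuousOn_finsetSum _ fun i _ => (continuousOn_pi.1 hq i).const_mul (w i)
  have hV' : ∀ s ≥ t₀, HasDerivWithinAt (fun s => w ⬝ᵥ q s) (w ⬝ᵥ q' s) (Set.Ici s) s :=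
    fun s hs => .fun_sum fun i _ => (hasDerivWithinAt_pi.1 (hq' s hs) i).const_mul (w i)
  have hVle : ∀ s ≥ t₀, w ⬝ᵥ q' s ≤ -C⁻¹ * (w ⬝ᵥ q s) := fun s hs => by
    have : C⁻¹ * (w ⬝ᵥ q s) ≤ onenorm (q s) :=
      (inv_mul_le_iff₀ hC).2 (dotProduct_le_mul_onenorm (hq₀ s hs) hwC)
    linarith [hdecay s hs]
  have key : c * onenorm (q t) ≤ C * onenorm (q t₀) * Real.exp (-C⁻¹ * (t - t₀)) :=
    calc c * onenorm (q t) ≤ w ⬝ᵥ q t := mul_onenorm_le_dotProduct (hq₀ t ht) hcw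
      _ ≤ w ⬝ᵥ q t₀ * Real.exp (-C⁻¹ * (t - t₀)) :=
        le_mul_exp_of_right_deriv_le_mul hV hV' hVle ht
      _ ≤ _ := by gcongr; exact dotProduct_le_mul_onenorm (hq₀ t₀ le_rfl) hwC
  calc onenorm (q t) ≤ C * onenorm (q t₀) * Real.exp (-C⁻¹ * (t - t₀)) / c :=
        (le_div_iff₀' hc).2 key
    _ = _ := by ring

end LinearLyapunov

/-- Compartmental matrices with upstream rates at most `b` in which every compartment `i` drains at
rate at least `α` into later compartments and the environment together. That total rate is
`∑ k > i, F k i - ∑ k, F k i`, hence the truncated column sum. Unlike in `ℱ(a, b, l)`, the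
compartments with an outflow to the environment need not be the last ones. -/
structure IsDraining {n : ℕ} (α b : ℝ) (F : Matrix (Fin n) (Fin n) ℝ) : Prop where
  isCompartmental : IsCompartmental F
  upper_le : ∀ i j, i < j → F i j ≤ b
  sum_Iic_le : ∀ i, ∑ k ∈ Iic i, F k i ≤ -α

theorem MemCalF.isDraining {n l : ℕ} {hl : 1 < l} {hln : l ≤ n} {a : Fin l → ℝ} {α b : ℝ}
    {F : Matrix (Fin n) (Fin n) ℝ} (hF : MemCalF hl hln a b F) (hα : ∀ i, α ≤ a i) :
    IsDraining α b F := by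
  obtain ⟨hcomp, hupper, hdown, hout⟩ := hF
  refine ⟨hcomp, hupper, fun i => ?_⟩
  have hsplit : ∑ k ∈ Iic i, F k i + ∑ k with i < k, F k i = ∑ k, F k i := by
    simpa only [not_le, filter_ge_eq_Iic] using sum_filter_add_sum_filter_not univ (· ≤ i) (F · i)
  by_cases hi : (i : ℕ) + 1 < l
  · linarith [hdown i hi, hα ⟨i, Nat.lt_of_succ_lt hi⟩, hcomp.2 i]
  · have hnonneg : 0 ≤ ∑ k with i < k, F k i :=
      sum_nonneg fun k hk => hcomp.1 k i (mem_filter.1 hk).2.ne'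
    linarith [hout i (by omega), hα ⟨l - 1, by omega⟩]

/-- The ratio `M` between the depths `M ^ k` assigned to successive compartments `k`, chosen so that
`(M - 1) * α = n * b + 1`. -/
noncomputable def drainRatio (n : ℕ) (α b : ℝ) : ℝ := 1 + (n * b + 1) / α

/-- The weights `M ^ n - M ^ k` of the Lyapunov function, where `M = drainRatio n α b`: the height
of compartment `k` above the environment, which takes the place of compartment `n`. -/
noncomputable def drainWeight (n : ℕ) (α b : ℝ) (k : Fin n) : ℝ :=
  drainRatio n α b ^ n - drainRatio n α b ^ (k : ℕ)

section Weights

variable {n : ℕ} {α b : ℝ}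

theorem one_lt_drainRatio (hα : 0 < α) (hb : 0 ≤ b) : 1 < drainRatio n α b :=
  lt_add_of_pos_right 1 (by positivity)

theorem drainRatio_sub_one_mul (hα : α ≠ 0) : (drainRatio n α b - 1) * α = n * b + 1 := by
  rw [drainRatio, add_sub_cancel_left, div_mul_cancel₀ _ hα]

theorem drainRatio_sub_one_le_drainWeight (hα : 0 < α) (hb : 0 ≤ b) (k : Fin n) :
    drainRatio n α b - 1 ≤ drainWeight n α b k := by
  have hM : 1 < drainRatio n α b := one_lt_drainRatio hα hb
  rw [drainWeight]
  set M := drainRatio n α b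
  calc M - 1 ≤ M ^ (k : ℕ) * (M - 1) :=
        le_mul_of_one_le_left (sub_nonneg.2 hM.le) (one_le_pow₀ hM.le)
    _ = M ^ ((k : ℕ) + 1) - M ^ (k : ℕ) := by ring
    _ ≤ M ^ n - M ^ (k : ℕ) := sub_le_sub_right (pow_le_pow_right₀ hM.le k.isLt) _

theorem drainWeight_le (hα : 0 < α) (hb : 0 ≤ b) (k : Fin n) :
    drainWeight n α b k ≤ drainRatio n α b ^ n :=
  sub_le_self _ (pow_nonneg (zero_le_one.trans (one_lt_drainRatio hα hb).le) _)

end Weights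

section Column

variable {n : ℕ} {M b : ℝ} {f : Fin n → ℝ} {i : Fin n}

theorem sum_Iic_pow_sub_pow_mul_le (hM : 1 ≤ M) (hb : 0 ≤ b) (hnonneg : ∀ k < i, 0 ≤ f k)
    (hle : ∀ k < i, f k ≤ b) :
    ∑ k ∈ Iic i, (M ^ (i : ℕ) - M ^ (k : ℕ)) * f k ≤ n * b * M ^ (i : ℕ) := by
  have hM₀ : 0 ≤ M := zero_le_one.trans hM
  have hterm : ∀ k ∈ Iio i, (M ^ (i : ℕ) - M ^ (k : ℕ)) * f k ≤ M ^ (i : ℕ) * b := fun k hk =>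
    have hki : k < i := mem_Iio.1 hk
    mul_le_mul (sub_le_self _ (pow_nonneg hM₀ _)) (hle k hki) (hnonneg k hki) (pow_nonneg hM₀ _)
  calc ∑ k ∈ Iic i, (M ^ (i : ℕ) - M ^ (k : ℕ)) * f k
      = ∑ k ∈ Iio i, (M ^ (i : ℕ) - M ^ (k : ℕ)) * f k := by
        rw [← Iio_insert, sum_insert notMem_Iio_self, sub_self, zero_mul, zero_add]
    _ ≤ (i : ℕ) * (M ^ (i : ℕ) * b) := by
        simpa only [Fin.card_Iio, nsmul_eq_mul] using sum_le_card_nsmul _ _ _ hterm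
    _ ≤ n * (M ^ (i : ℕ) * b) := by gcongr; exact i.isLt.le
    _ = n * b * M ^ (i : ℕ) := by ring

/-- Mass leaving `i` downstream sinks at least to the depth `M ^ (i + 1)`, so raising the bottom
from `M ^ n` to that depth, and ignoring what sinks even deeper, can only increase the sum. -/
theorem sum_pow_sub_pow_mul_le_sum_Iic (hM : 1 ≤ M) (hnonneg : ∀ k > i, 0 ≤ f k)
    (hsum : ∑ k, f k ≤ 0) :
    ∑ k : Fin n, (M ^ n - M ^ (k : ℕ)) * f k
      ≤ ∑ k ∈ Iic i, (M ^ ((i : ℕ) + 1) - M ^ (k : ℕ)) * f k :=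
  calc ∑ k : Fin n, (M ^ n - M ^ (k : ℕ)) * f k
      = ∑ k : Fin n, (M ^ ((i : ℕ) + 1) - M ^ (k : ℕ)) * f k
          + (M ^ n - M ^ ((i : ℕ) + 1)) * ∑ k, f k := by
        rw [mul_sum, ← sum_add_distrib]
        exact sum_congr rfl fun k _ => by ring
    _ ≤ ∑ k : Fin n, (M ^ ((i : ℕ) + 1) - M ^ (k : ℕ)) * f k :=
        add_le_of_nonpos_right <| mul_nonpos_of_nonneg_of_nonpos
          (sub_nonneg.2 (pow_le_pow_right₀ hM i.isLt)) hsum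
    _ ≤ ∑ k ∈ Iic i, (M ^ ((i : ℕ) + 1) - M ^ (k : ℕ)) * f k := by
        rw [← sum_add_sum_compl (Iic i)]
        refine add_le_of_nonpos_right (sum_nonpos fun k hk => ?_)
        have hik : i < k := by simpa only [mem_compl, mem_Iic, not_le] using hk
        exact mul_nonpos_of_nonpos_of_nonneg (sub_nonpos.2 (pow_le_pow_right₀ hM hik))
          (hnonneg k hik)

end Column

theorem IsDraining.drainWeight_vecMul_le {n : ℕ} {α b : ℝ} {F : Matrix (Fin n) (Fin n) ℝ}
    (hF : IsDraining α b F) (hα : 0 < α) (hb : 0 ≤ b) : drainWeight n α b ᵥ* F ≤ -1 := by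
  intro i
  have hM : 1 ≤ drainRatio n α b := (one_lt_drainRatio hα hb).le
  have hMα : (drainRatio n α b - 1) * α = n * b + 1 := drainRatio_sub_one_mul hα.ne'
  simp only [vecMul, dotProduct, drainWeight]
  set M := drainRatio n α b
  have hdown : M ^ (i : ℕ) * (M - 1) * ∑ k ∈ Iic i, F k i ≤ M ^ (i : ℕ) * (M - 1) * -α :=
    mul_le_mul_of_nonneg_left (hF.sum_Iic_le i)
      (mul_nonneg (pow_nonneg (zero_le_one.trans hM) _) (sub_nonneg.2 hM))
  have hup : ∑ k ∈ Iic i, (M ^ (i : ℕ) - M ^ (k : ℕ)) * F k i ≤ n * b * M ^ (i : ℕ) :=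
    sum_Iic_pow_sub_pow_mul_le hM hb (fun k hk => hF.isCompartmental.1 k i hk.ne)
      fun k hk => hF.upper_le k i hk
  calc ∑ k : Fin n, (M ^ n - M ^ (k : ℕ)) * F k i
      ≤ ∑ k ∈ Iic i, (M ^ ((i : ℕ) + 1) - M ^ (k : ℕ)) * F k i :=
        sum_pow_sub_pow_mul_le_sum_Iic hM (fun k hk => hF.isCompartmental.1 k i hk.ne')
          (hF.isCompartmental.2 i)
    _ = M ^ (i : ℕ) * (M - 1) * ∑ k ∈ Iic i, F k i
          + ∑ k ∈ Iic i, (M ^ (i : ℕ) - M ^ (k : ℕ)) * F k i := by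
        rw [mul_sum, ← sum_add_distrib]
        exact sum_congr rfl fun k _ => by ring
    _ ≤ M ^ (i : ℕ) * (M - 1) * -α + n * b * M ^ (i : ℕ) := add_le_add hdown hup
    _ = -M ^ (i : ℕ) := by linear_combination -M ^ (i : ℕ) * hMα
    _ ≤ -1 := neg_le_neg (one_le_pow₀ hM)

theorem stmt18_general (n : ℕ) (hn : 0 < n) (α : ℝ) (hα : 0 < α) (b : ℝ) (hb : 0 ≤ b) :
    ∃ lam : ℝ, 0 < lam ∧ ∃ γ : ℝ, 1 ≤ γ ∧
      ∀ X : Set (Fin n → ℝ), X ⊆ {x : Fin n → ℝ | ∀ i, 0 ≤ x i} →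
      ∀ F : ℝ → (Fin n → ℝ) → Matrix (Fin n) (Fin n) ℝ,
      ∀ g : ℝ → (Fin n → ℝ) → (Fin n → ℝ),
      (∀ t ≥ (0 : ℝ), ∀ x ∈ X, x ≤ g t x) →
      (∀ t ≥ (0 : ℝ), ∀ x ∈ X, IsDraining α b (F t x)) →
      ∀ q : ℝ → Fin n → ℝ, ContinuousOn q (Set.Ici 0) →
      (∀ t ≥ (0 : ℝ), q t ∈ X ∧
        HasDerivWithinAt q (F t (q t) *ᵥ g t (q t)) (Set.Ici t) t) →
      ∀ t ≥ (0 : ℝ), onenorm (q t) ≤ γ * Real.exp (-lam * t) * onenorm (q 0) := by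
  set M := drainRatio n α b
  have hM : 1 < M := one_lt_drainRatio hα hb
  have hMn : 0 < M ^ n := pow_pos (zero_lt_one.trans hM) n
  have hγ : M - 1 ≤ M ^ n := (sub_le_self M zero_le_one).trans (le_self_pow₀ hM.le hn.ne')
  refine ⟨(M ^ n)⁻¹, inv_pos.2 hMn, M ^ n / (M - 1), (one_le_div (sub_pos.2 hM)).2 hγ, ?_⟩
  intro X hX F g hg hF q hcont hq t ht
  have hdecay : ∀ s ≥ 0, drainWeight n α b ⬝ᵥ F s (q s) *ᵥ g s (q s) ≤ -onenorm (q s) :=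
    fun s hs =>
      have hqX : q s ∈ X := (hq s hs).1
      dotProduct_mulVec_le_neg_onenorm ((hF s hs _ hqX).drainWeight_vecMul_le hα hb) (hX hqX)
        (hg s hs _ hqX)
  simpa only [sub_zero] using onenorm_le_of_dotProduct_right_deriv_le (sub_pos.2 hM) hMn
    (drainRatio_sub_one_le_drainWeight hα hb) (drainWeight_le hα hb)
    (fun s hs => hX (hq s hs).1) hcont (fun s hs => (hq s hs).2) hdecay ht

/-- there are `λ > 0` and `γ ≥ 1` depending only on `n`, `l`, `a`
and `b` such that for every state space `𝒳 ⊆ [0,∞)^n`, every `F` taking values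
in `ℱ(a,b,l)` on `[0,∞) × 𝒳` and every `g` with `g(t,x) ≥ x` on `[0,∞) × 𝒳`,
all solutions of `q̇ = F(t,q) g(t,q)` staying in `𝒳` satisfy
`|q(t)|₁ ≤ γ e^{−λt} |q(0)|₁`. -/
theorem stmt18 (n l : ℕ) (hn : 0 < n) (hl : 1 < l) (hln : l ≤ n)
    (a : Fin l → ℝ) (ha : ∀ i, 0 < a i) (b : ℝ) (hb : 0 ≤ b) :
    ∃ lam : ℝ, 0 < lam ∧ ∃ γ : ℝ, 1 ≤ γ ∧
      ∀ X : Set (Fin n → ℝ), X ⊆ {x : Fin n → ℝ | ∀ i, 0 ≤ x i} →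
      ∀ F : ℝ → (Fin n → ℝ) → Matrix (Fin n) (Fin n) ℝ,
      ∀ g : ℝ → (Fin n → ℝ) → (Fin n → ℝ),
      (∀ t ≥ (0 : ℝ), ∀ x ∈ X, x ≤ g t x) →
      (∀ t ≥ (0 : ℝ), ∀ x ∈ X, MemCalF hl hln a b (F t x)) →
      ∀ q : ℝ → Fin n → ℝ,
      (∀ t ≥ (0 : ℝ), q t ∈ X ∧
        HasDerivAt q ((F t (q t)).mulVec (g t (q t))) t) →
      ∀ t ≥ (0 : ℝ), onenorm (q t) ≤ γ * Real.exp (-lam * t) * onenorm (q 0) := by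
  have : Nonempty (Fin l) := ⟨⟨0, by omega⟩⟩
  obtain ⟨i, hi⟩ := Finite.exists_min a
  obtain ⟨lam, hlam, γ, hγ, hdecay⟩ := stmt18_general n hn (a i) (ha i) b hb
  exact ⟨lam, hlam, γ, hγ, fun X hX F g hg hF q hq => hdecay X hX F g hg
    (fun t ht x hx => (hF t ht x hx).isDraining hi) q
    (fun t ht => (hq t ht).2.continuousAt.continuousWithinAt)
    fun t ht => ⟨(hq t ht).1, (hq t ht).2.hasDerivWithinAt⟩⟩
end
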